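/- In the free energy expansion F_N(t) = Σ_G s(G) N^{F(G) − (3/2)b(G)} (−t)^{b(G)} of the O(N)^3 tetrahedral tensor model, the exponent of N satisfies F(G) − (3/2)b(G) ≤ 3 for all connected graphs G, with equality exactly for melonic graphs; the next largest exponent is 5/2, attained exactly by melon-decorated double tadpoles. -/

import Mathlib

/-!  A combinatorial model of the Feynman graphs of the rank-3 tetrahedral
(`O(N)^3`) tensor model.

A graph consists of a finite set `B` of bubbles (copies of the tetrahedron
`K_4`); each bubble has four vertices, so the vertex set is `B × Fin 4`.
Inside every bubble the edges of colors `1,2,3` are given once and for all by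
the three fixed-point-free involutions of `Fin 4` (the proper 3-edge-coloring
of `K_4`).  The color-0 propagator edges, one per vertex, are encoded by a
fixed-point-free involution `pairing` of the vertex set. -/

open Equiv

/-- The color-`c` (for `c ∈ {1,2,3}`, here `c : Fin 3`) perfect matching on the
four vertices of a tetrahedral bubble. -/
def bubblePerm : Fin 3 → Equiv.Perm (Fin 4) :=
  ![Equiv.swap 0 1 * Equiv.swap 2 3,
    Equiv.swap 0 2 * Equiv.swap 1 3,
    Equiv.swap 0 3 * Equiv.swap 1 2]

/-- A Feynman graph of the tetrahedral tensor model: a finite set of `K_4`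
bubbles together with a fixed-point-free involution of the vertex set
describing the color-0 edges. -/
structure TGraph where
  B : Type
  [fintypeB : Fintype B]
  [decB : DecidableEq B]
  pairing : Equiv.Perm (B × Fin 4)
  invol : ∀ v, pairing (pairing v) = v
  fixfree : ∀ v, pairing v ≠ v

attribute [instance] TGraph.fintypeB TGraph.decB

namespace TGraph

/-- The vertex set of a graph. -/
abbrev V (G : TGraph) : Type := G.B × Fin 4

/-- The permutation of the vertices given by the color-`c` edges inside the
bubbles. -/
def colPerm (G : TGraph) (c : Fin 3) : Equiv.Perm G.V :=
  (Equiv.refl G.B).prodCongr (bubblePerm c)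

/-- The number of bubbles of a graph. -/
def b (G : TGraph) : ℕ := Fintype.card G.B

/-- The subgroup of permutations of the vertices generated by the color-0
pairing and the color-`c` matching: its orbits are exactly the faces of
color `c` (cycles alternating colors `0` and `c`). -/
def faceGroup (G : TGraph) (c : Fin 3) : Subgroup (Equiv.Perm G.V) :=
  Subgroup.closure {G.pairing, G.colPerm c}

/-- Two vertices lie on the same face of color `c`. -/
def sameFace (G : TGraph) (c : Fin 3) (u v : G.V) : Prop :=
  u ∈ MulAction.orbit (G.faceGroup c) v

/-- The number of faces of color `c` of the graph. -/
noncomputable def numFaces (G : TGraph) (c : Fin 3) : ℕ :=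
  Nat.card (MulAction.orbitRel.Quotient (G.faceGroup c) G.V)

/-- The total number of faces of the graph. -/
noncomputable def F (G : TGraph) : ℕ := ∑ c : Fin 3, G.numFaces c

/-- The length of the face of color `c` through the vertex `v` (a face of
length `n` consists of `n` color-0 edges and `n` color-`c` edges, hence `2n`
vertices). -/
noncomputable def faceLength (G : TGraph) (c : Fin 3) (v : G.V) : ℕ :=
  Nat.card (MulAction.orbit (G.faceGroup c) v) / 2

/-- The subgroup generated by all edges of the graph. -/
def fullGroup (G : TGraph) : Subgroup (Equiv.Perm G.V) :=
  Subgroup.closure ({G.pairing} ∪ Set.range G.colPerm)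

/-- A graph is connected if any vertex can be reached from any other one along
its edges. -/
def Connected (G : TGraph) : Prop :=
  ∀ u v : G.V, u ∈ MulAction.orbit G.fullGroup v

/-- One step along an edge of the graph avoiding the color-0 edges whose
endpoints belong to `S`. -/
def stepAvoiding (G : TGraph) (S : Set G.V) (u v : G.V) : Prop :=
  (∃ c, v = G.colPerm c u) ∨ (v = G.pairing u ∧ u ∉ S ∧ v ∉ S)

/-- Reachability in the graph with the color-0 edges meeting `S` removed. -/
def reachAvoiding (G : TGraph) (S : Set G.V) : G.V → G.V → Prop :=
  Relation.ReflTransGen (G.stepAvoiding S)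

/-- The pair of color-0 edges through the vertices `u` and `w` disconnects the
graph when removed.  Together with the requirement that the two edges be
distinct, this is the notion of a 2-edge-cut of color-0 edges. -/
def CutDisconnects (G : TGraph) (u w : G.V) : Prop :=
  ¬ ∀ x y : G.V, G.reachAvoiding {u, G.pairing u, w, G.pairing w} x y

/-- Two vertices are connected by a 2-point function if they are joined by a
color-0 edge, or if their two (distinct) color-0 edges form a 2-edge-cut. -/
def TwoPoint (G : TGraph) (x y : G.V) : Prop :=
  G.pairing x = y ∨ (y ≠ x ∧ y ≠ G.pairing x ∧ G.CutDisconnects x y)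

/-- The flip of the two color-0 edges `{u, pairing u}` and `{w, pairing w}`
(assumed distinct) which reconnects `u` with `w` (and `pairing u` with
`pairing w`): the pairing is conjugated by the transposition exchanging
`pairing u` and `w`.  The other flip of this pair of edges is
`G.flip u (G.pairing w)`. -/
def flip (G : TGraph) (u w : G.V) : TGraph where
  B := G.B
  pairing := Equiv.swap (G.pairing u) w * G.pairing * Equiv.swap (G.pairing u) w
  invol := by
    intro v
    simp only [Equiv.Perm.mul_apply, Equiv.swap_apply_self, G.invol]
  fixfree := by
    intro v h
    simp only [Equiv.Perm.mul_apply] at h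
    have h' : G.pairing (Equiv.swap (G.pairing u) w v) = Equiv.swap (G.pairing u) w v := by
      have := congrArg (Equiv.swap (G.pairing u) w) h
      simpa using this
    exact G.fixfree _ h'

/-- The face of color `c` through the color-0 edge `{v, pairing v}` has
length 2 (it consists of this edge, a color-`c` edge, a second color-0 edge
and a second color-`c` edge closing the cycle). -/
def FaceLen2 (G : TGraph) (c : Fin 3) (v : G.V) : Prop :=
  G.pairing v ≠ G.colPerm c v ∧
    G.pairing (G.colPerm c (G.pairing v)) = G.colPerm c v

/-- A proper face of length 2 of color `c` through `v`: a face of length 2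
whose two color-0 edges connect two distinct bubbles. -/
def ProperFace2 (G : TGraph) (c : Fin 3) (v : G.V) : Prop :=
  G.FaceLen2 c v ∧ (G.pairing v).1 ≠ v.1

/-- A graph maximizes the number of faces if it is connected and no connected
graph with the same number of bubbles has more faces. -/
def MaximizesFaces (G : TGraph) : Prop :=
  G.Connected ∧ ∀ H : TGraph, H.Connected → H.b = G.b → H.F ≤ G.F

/-- Isomorphisms of graphs: bijections of the vertex sets commuting with the
color-0 pairing and with the colored matchings inside the bubbles. -/
structure Iso (G H : TGraph) where
  toEquiv : G.V ≃ H.V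
  map_pairing : ∀ v, toEquiv (G.pairing v) = H.pairing (toEquiv v)
  map_col : ∀ c v, toEquiv (G.colPerm c v) = H.colPerm c (toEquiv v)

/-- Two graphs are isomorphic. -/
def IsIso (G H : TGraph) : Prop := Nonempty (Iso G H)

end TGraph

open TGraph

/-- The leading-order two-bubble graph `G_2`: two tetrahedral bubbles with
corresponding vertices joined by four color-0 edges, so that all six faces
have length 2. -/
def G2 : TGraph where
  B := Fin 2
  pairing := (Equiv.swap (0 : Fin 2) 1).prodCongr (Equiv.refl (Fin 4))
  invol := by
    rintro ⟨i, k⟩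
    simp [Equiv.prodCongr_apply, Equiv.swap_apply_self]
  fixfree := by
    rintro ⟨i, k⟩ h
    have hi : Equiv.swap (0 : Fin 2) 1 i = i := congrArg Prod.fst h
    fin_cases i <;> simp_all

/-- The double tadpole `G_1^{(c)}`: one tetrahedral bubble whose two color-0
edges each join two vertices already adjacent by an edge of color `c`. -/
def G1 (c : Fin 3) : TGraph where
  B := Fin 1
  pairing := (Equiv.refl (Fin 1)).prodCongr (bubblePerm c)
  invol := by
    rintro ⟨i, k⟩
    have hk : ∀ j : Fin 4, bubblePerm c (bubblePerm c j) = j := by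
      fin_cases c <;> decide
    simp [Equiv.prodCongr_apply, hk]
  fixfree := by
    rintro ⟨i, k⟩ h
    have hk : bubblePerm c k = k := congrArg Prod.snd h
    have hne : ∀ j : Fin 4, bubblePerm c j ≠ j := by
      fin_cases c <;> decide
    exact hne k hk

namespace TGraph

variable (H K : TGraph)

/-- The image of a vertex of `H` in the glued graph. -/
def inlV (x : H.V) : (H.B ⊕ K.B) × Fin 4 := (Sum.inl x.1, x.2)

/-- The image of a vertex of `K` in the glued graph. -/
def inrV (y : K.V) : (H.B ⊕ K.B) × Fin 4 := (Sum.inr y.1, y.2)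

/-- The underlying function of the pairing of the graph obtained by gluing `H`
and `K` along the color-0 edges `{p, H.pairing p}` and `{q, K.pairing q}`:
these two edges are cut and the half-edges are reglued as `p — q` and
`H.pairing p — K.pairing q`.  The new pair of edges is a 2-edge-cut of the
resulting graph when `H` and `K` are connected. -/
def glueFun (p : H.V) (q : K.V) : (H.B ⊕ K.B) × Fin 4 → (H.B ⊕ K.B) × Fin 4 :=
  fun z =>
    match z with
    | (Sum.inl u, k) =>
        if (u, k) = p then inrV H K q
        else if (u, k) = H.pairing p then inrV H K (K.pairing q)
        else inlV H K (H.pairing (u, k))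
    | (Sum.inr u, k) =>
        if (u, k) = q then inlV H K p
        else if (u, k) = K.pairing q then inlV H K (H.pairing p)
        else inrV H K (K.pairing (u, k))

theorem glueFun_inlV (p : H.V) (q : K.V) (x : H.V) :
    glueFun H K p q (inlV H K x) =
      if x = p then inrV H K q
      else if x = H.pairing p then inrV H K (K.pairing q)
      else inlV H K (H.pairing x) := by
  cases x
  rfl

theorem glueFun_inrV (p : H.V) (q : K.V) (y : K.V) :
    glueFun H K p q (inrV H K y) =
      if y = q then inlV H K p
      else if y = K.pairing q then inlV H K (H.pairing p)
      else inrV H K (K.pairing y) := by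
  cases y
  rfl

theorem inlV_injective : Function.Injective (inlV H K) := by
  rintro ⟨u, k⟩ ⟨u', k'⟩ h
  have h1 : (Sum.inl u : H.B ⊕ K.B) = Sum.inl u' := congrArg Prod.fst h
  have h2 : k = k' := congrArg Prod.snd h
  exact Prod.ext (Sum.inl_injective h1) h2

theorem inrV_injective : Function.Injective (inrV H K) := by
  rintro ⟨u, k⟩ ⟨u', k'⟩ h
  have h1 : (Sum.inr u : H.B ⊕ K.B) = Sum.inr u' := congrArg Prod.fst h
  have h2 : k = k' := congrArg Prod.snd h
  exact Prod.ext (Sum.inr_injective h1) h2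

theorem inlV_ne_inrV (x : H.V) (y : K.V) : inlV H K x ≠ inrV H K y := by
  intro h
  exact Sum.inl_ne_inr (congrArg Prod.fst h)

theorem glueFun_invol_inl (p : H.V) (q : K.V) (x : H.V) :
    glueFun H K p q (glueFun H K p q (inlV H K x)) = inlV H K x := by
  rw [glueFun_inlV]
  by_cases h1 : x = p
  · rw [if_pos h1, glueFun_inrV, if_pos rfl, h1]
  · by_cases h2 : x = H.pairing p
    · rw [if_neg h1, if_pos h2, glueFun_inrV,
        if_neg (fun h => K.fixfree q h), if_pos rfl, h2]
    · have hne1 : H.pairing x ≠ p := by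
        intro h; apply h2
        have := congrArg H.pairing h
        rw [H.invol] at this; exact this
      have hne2 : H.pairing x ≠ H.pairing p := fun h => h1 (H.pairing.injective h)
      rw [if_neg h1, if_neg h2, glueFun_inlV, if_neg hne1, if_neg hne2, H.invol]

theorem glueFun_invol_inr (p : H.V) (q : K.V) (y : K.V) :
    glueFun H K p q (glueFun H K p q (inrV H K y)) = inrV H K y := by
  rw [glueFun_inrV]
  by_cases h1 : y = q
  · rw [if_pos h1, glueFun_inlV, if_pos rfl, h1]
  · by_cases h2 : y = K.pairing q
    · rw [if_neg h1, if_pos h2, glueFun_inlV,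
        if_neg (fun h => H.fixfree p h), if_pos rfl, h2]
    · have hne1 : K.pairing y ≠ q := by
        intro h; apply h2
        have := congrArg K.pairing h
        rw [K.invol] at this; exact this
      have hne2 : K.pairing y ≠ K.pairing q := fun h => h1 (K.pairing.injective h)
      rw [if_neg h1, if_neg h2, glueFun_inrV, if_neg hne1, if_neg hne2, K.invol]

theorem glueFun_involutive (p : H.V) (q : K.V) :
    Function.Involutive (glueFun H K p q) := by
  rintro ⟨(u | u), k⟩
  · exact glueFun_invol_inl H K p q (u, k)
  · exact glueFun_invol_inr H K p q (u, k)

theorem glueFun_fixfree (p : H.V) (q : K.V) :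
    ∀ z, glueFun H K p q z ≠ z := by
  have hl : ∀ x : H.V, glueFun H K p q (inlV H K x) ≠ inlV H K x := by
    intro x h
    rw [glueFun_inlV] at h
    by_cases h1 : x = p
    · rw [if_pos h1] at h
      exact inlV_ne_inrV H K x q h.symm
    · by_cases h2 : x = H.pairing p
      · rw [if_neg h1, if_pos h2] at h
        exact inlV_ne_inrV H K x (K.pairing q) h.symm
      · rw [if_neg h1, if_neg h2] at h
        exact H.fixfree x (inlV_injective H K h)
  have hr : ∀ y : K.V, glueFun H K p q (inrV H K y) ≠ inrV H K y := by
    intro y h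
    rw [glueFun_inrV] at h
    by_cases h1 : y = q
    · rw [if_pos h1] at h
      exact inlV_ne_inrV H K p y h
    · by_cases h2 : y = K.pairing q
      · rw [if_neg h1, if_pos h2] at h
        exact inlV_ne_inrV H K (H.pairing p) y h
      · rw [if_neg h1, if_neg h2] at h
        exact K.fixfree y (inrV_injective H K h)
  rintro ⟨(u | u), k⟩
  · exact hl (u, k)
  · exact hr (u, k)

/-- Gluing two graphs along a pair of color-0 edges.  When `H` and `K` are
connected, the two new color-0 edges form a 2-edge-cut of the glued graph, and
conversely every connected graph with a color-0 2-edge-cut arises this way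
from the two closed graphs obtained by cutting the two edges and closing each
side. -/
def glue (p : H.V) (q : K.V) : TGraph where
  B := H.B ⊕ K.B
  pairing := (glueFun_involutive H K p q).toPerm
  invol := fun v => glueFun_involutive H K p q v
  fixfree := fun v => glueFun_fixfree H K p q v

/-- Insertion of a melonic dipole (the 2-point graph obtained by cutting one
color-0 edge of `G_2`) on the color-0 edge `{v, G.pairing v}` of `G`. -/
def insertDipole (G : TGraph) (v : G.V) : TGraph :=
  glue G G2 v ((0 : Fin 2), (0 : Fin 4))

end TGraph

open TGraph

/-- Melonic graphs (up to isomorphism): `G_2` is melonic, and inserting a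
melonic dipole on any color-0 edge of a melonic graph yields a melonic
graph. -/
inductive IsMelonic : TGraph → Prop
  | base {G : TGraph} (h : IsIso G G2) : IsMelonic G
  | insert {G : TGraph} (hG : IsMelonic G) (v : G.V) {H : TGraph}
      (h : IsIso H (G.insertDipole v)) : IsMelonic H

/-- Double tadpoles decorated with melonic 2-point functions (up to
isomorphism): these are exactly the graphs obtained from one of the double
tadpoles `G_1^{(c)}` by repeatedly inserting melonic dipoles on color-0 edges,
i.e. double tadpoles whose two color-0 edges are replaced by melonic 2-point
functions. -/
inductive IsDecoratedTadpole : TGraph → Prop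
  | base {G : TGraph} (c : Fin 3) (h : IsIso G (G1 c)) : IsDecoratedTadpole G
  | insert {G : TGraph} (hG : IsDecoratedTadpole G) (v : G.V) {H : TGraph}
      (h : IsIso H (G.insertDipole v)) : IsDecoratedTadpole H

/-!
Deleting one of the three colors of the bubble edges leaves a 3-colored graph, a jacket of the
graph, whose number of faces is controlled by the Euler characteristic of a closed surface. The sum
over the three jackets is `2 F ≤ 3 b + 6`. If moreover `2 F ≥ 3 b + 5`, then some jacket is planar,
hence bipartite, and its two-coloring forces the faces of the deleted color `c` to have even length.
There are so many of these faces that one has length two: the edges of color `c` at the two ends of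
some propagator lead to the ends of a second one. If this happens at the same place for all three
colors, then the graph is `G_2` or a double tadpole. Otherwise a flip at an edge of another color
splits two faces and merges at most two, which increases `F` beyond the bound for connected graphs.
The flip thus disconnects the graph, which is therefore obtained by gluing two smaller graphs along
a two-edge-cut. Induction on the number of bubbles concludes, since `2 F - 3 b - 6` is additive
under gluing and gluing a melonic graph onto an edge amounts to inserting melonic dipoles.
-/

section Invariants

variable {α : Type*}

theorem apply_eq_of_mem_closure {β : Type*} {S : Set (Perm α)} {f : α → β}
    (hf : ∀ σ ∈ S, ∀ x, f (σ x) = f x) {g : Perm α} (hg : g ∈ Subgroup.closure S) (x : α) :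
    f (g x) = f x := by
  induction hg using Subgroup.closure_induction generalizing x with
  | mem σ hσ => exact hf σ hσ x
  | one => rfl
  | mul a b _ _ ha hb => rw [Perm.mul_apply, ha, hb]
  | inv a _ ha => exact (ha (a⁻¹ x)).symm.trans (congrArg f (a.apply_symm_apply x))

/-- The `𝔽₂`-valued functions that are constant along every permutation in `S`; the dimension of
this space is the number of orbits of the group generated by `S`. -/
def invariantFun (S : Set (Perm α)) : Submodule (ZMod 2) (α → ZMod 2) where
  carrier := {f | ∀ σ ∈ S, ∀ x, f (σ x) = f x}
  add_mem' hf hg σ hσ x := congrArg₂ (· + ·) (hf σ hσ x) (hg σ hσ x)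
  zero_mem' _ _ _ := rfl
  smul_mem' a _ hf σ hσ x := congrArg (a * ·) (hf σ hσ x)

theorem mem_invariantFun {S : Set (Perm α)} {f : α → ZMod 2} :
    f ∈ invariantFun S ↔ ∀ σ ∈ S, ∀ x, f (σ x) = f x :=
  Iff.rfl

theorem mem_invariantFun_singleton {σ : Perm α} {f : α → ZMod 2} :
    f ∈ invariantFun {σ} ↔ ∀ x, f (σ x) = f x := by
  simp [mem_invariantFun]

theorem mem_invariantFun_pair {σ τ : Perm α} {f : α → ZMod 2} :
    f ∈ invariantFun {σ, τ} ↔ (∀ x, f (σ x) = f x) ∧ ∀ x, f (τ x) = f x := by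
  simp [mem_invariantFun]

theorem mem_invariantFun_insert {σ : Perm α} {S : Set (Perm α)} {f : α → ZMod 2} :
    f ∈ invariantFun (insert σ S) ↔ f ∈ invariantFun {σ} ∧ f ∈ invariantFun S := by
  simp [mem_invariantFun]

theorem invariantFun_inf (S T : Set (Perm α)) :
    invariantFun S ⊓ invariantFun T = invariantFun (S ∪ T) := by
  ext f
  simp only [Submodule.mem_inf, mem_invariantFun, Set.mem_union, or_imp, forall_and]

theorem invariantFun_eq_range (S : Set (Perm α)) :
    invariantFun S = LinearMap.range (LinearMap.funLeft (ZMod 2) (ZMod 2)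
      (Quotient.mk'' : α → MulAction.orbitRel.Quotient (Subgroup.closure S) α)) := by
  ext f
  constructor
  · intro hf
    have hconst : ∀ x y, (MulAction.orbitRel (Subgroup.closure S) α) x y → f x = f y := by
      rintro _ y ⟨g, rfl⟩
      exact apply_eq_of_mem_closure hf g.2 y
    exact ⟨fun q => Quotient.liftOn' q f hconst, rfl⟩
  · rintro ⟨f, rfl⟩ σ hσ x
    exact congrArg f (Quotient.sound' ⟨⟨σ, Subgroup.subset_closure hσ⟩, rfl⟩)

theorem finrank_invariantFun [Finite α] (S : Set (Perm α)) :
    Module.finrank (ZMod 2) (invariantFun S) =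
      Nat.card (MulAction.orbitRel.Quotient (Subgroup.closure S) α) := by
  have := Fintype.ofFinite (MulAction.orbitRel.Quotient (Subgroup.closure S) α)
  rw [invariantFun_eq_range, LinearMap.finrank_range_of_inj
    (LinearMap.funLeft_injective_of_surjective _ _ _ Quotient.mk''_surjective),
    Module.finrank_fintype_fun_eq_card, Nat.card_eq_fintype_card]

theorem finrank_invariantFun_add_le [Finite α] {S T : Set (Perm α)}
    (h : MulAction.IsPretransitive (Subgroup.closure (S ∪ T)) α) :
    Module.finrank (ZMod 2) (invariantFun S) + Module.finrank (ZMod 2) (invariantFun T) ≤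
      Module.finrank (ZMod 2) ↥(invariantFun S ⊔ invariantFun T) + 1 := by
  have := (MulAction.pretransitive_iff_subsingleton_quotient _ _).1 h
  rw [← Submodule.finrank_sup_add_finrank_inf_eq, invariantFun_inf, finrank_invariantFun (S ∪ T)]
  exact Nat.add_le_add_left (Finite.card_le_one_iff_subsingleton.2 this) _

/-- A fixed-point-free involution, i.e. a perfect matching of the points of `α`. -/
structure IsPerfectMatching (σ : Perm α) : Prop where
  apply_apply : ∀ x, σ (σ x) = x
  apply_ne : ∀ x, σ x ≠ x

/-- `r` is a proper two-coloring of the graph whose edges join `x` to `σ x` for `σ ∈ S`. -/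
def IsAlternating (S : Set (Perm α)) (r : α → ZMod 2) : Prop :=
  ∀ σ ∈ S, ∀ x, r (σ x) = r x + 1

theorem IsAlternating.exists_union {S T : Set (Perm α)} {r t : α → ZMod 2}
    (hr : IsAlternating S r) (ht : IsAlternating T t)
    (hrt : r + t ∈ invariantFun S ⊔ invariantFun T) : ∃ s, IsAlternating (S ∪ T) s := by
  obtain ⟨f, hf, g, hg, hfg⟩ := Submodule.mem_sup.1 hrt
  have hrf : r + f = t + g := by
    rw [← sub_eq_zero, ZModModule.sub_eq_add, add_add_add_comm, hfg, ZModModule.add_self]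
  have add_invariant : ∀ {U : Set (Perm α)} {r f : α → ZMod 2}, IsAlternating U r →
      f ∈ invariantFun U → IsAlternating U (r + f) := fun hr hf σ hσ x => by
    rw [Pi.add_apply, Pi.add_apply, hr σ hσ, hf σ hσ, add_right_comm]
  refine ⟨r + f, fun σ hσ => hσ.elim (fun h => add_invariant hr hf σ h) fun h => ?_⟩
  rw [hrf]
  exact add_invariant ht hg σ h

namespace IsPerfectMatching

theorem exists_isAlternating {σ : Perm α} (hσ : IsPerfectMatching σ) :
    ∃ r : α → ZMod 2, IsAlternating {σ} r := by
  classical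
  let := linearOrderOfSTO (WellOrderingRel (α := α))
  refine ⟨fun x => if x < σ x then 1 else 0, ?_⟩
  rintro _ rfl x
  simp only [hσ.apply_apply]
  rcases lt_or_gt_of_ne (hσ.apply_ne x) with h | h
  · rw [if_pos h, if_neg h.not_gt, zero_add]
  · rw [if_neg h.not_gt, if_pos h, CharTwo.add_self_eq_zero]

theorem two_mul_card_filter {σ : Perm α} (hσ : IsPerfectMatching σ) {r : α → ZMod 2}
    (hr : ∀ x, r (σ x) = r x + 1) {s : Finset α} (hs : ∀ x ∈ s, σ x ∈ s) (a : ZMod 2) :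
    2 * (s.filter fun x => r x = a).card = s.card := by
  have hcompl : ∀ b : ZMod 2, b + 1 = a ↔ b ≠ a := by decide +revert
  have hcard : (s.filter fun x => r x = a).card = (s.filter fun x => r x ≠ a).card := by
    refine Finset.card_bij' (fun x _ => σ x) (fun x _ => σ x) ?_ ?_
      (fun x _ => hσ.apply_apply x) (fun x _ => hσ.apply_apply x)
    all_goals
      intro x hx
      simp only [Finset.mem_filter] at hx ⊢
      exact ⟨hs x hx.1, by simpa [hr, hcompl] using hx.2⟩
  rw [two_mul, ← Finset.card_filter_add_card_filter_not (s := s) fun x => r x = a, ← hcard]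

end IsPerfectMatching

section Fintype

variable [Fintype α]

/-- The orthogonal complement for the standard bilinear form on `α → 𝔽₂`. -/
noncomputable def dotOrthogonal (W : Submodule (ZMod 2) (α → ZMod 2)) :
    Submodule (ZMod 2) (α → ZMod 2) :=
  LinearMap.BilinForm.orthogonal (dotProductBilin (ZMod 2) (ZMod 2)) W

theorem mem_dotOrthogonal {W : Submodule (ZMod 2) (α → ZMod 2)} {f : α → ZMod 2} :
    f ∈ dotOrthogonal W ↔ ∀ g ∈ W, g ⬝ᵥ f = 0 :=
  Iff.rfl

theorem mem_dotOrthogonal_sup {W W' : Submodule (ZMod 2) (α → ZMod 2)} {f : α → ZMod 2} :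
    f ∈ dotOrthogonal (W ⊔ W') ↔ f ∈ dotOrthogonal W ∧ f ∈ dotOrthogonal W' := by
  refine ⟨fun h => ⟨fun g hg => h g (Submodule.mem_sup_left hg),
    fun g hg => h g (Submodule.mem_sup_right hg)⟩, fun h => mem_dotOrthogonal.2 fun g hg => ?_⟩
  obtain ⟨x, hx, y, hy, rfl⟩ := Submodule.mem_sup.1 hg
  rw [add_dotProduct, mem_dotOrthogonal.1 h.1 x hx, mem_dotOrthogonal.1 h.2 y hy, add_zero]

theorem finrank_add_finrank_dotOrthogonal (W : Submodule (ZMod 2) (α → ZMod 2)) :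
    Module.finrank (ZMod 2) W + Module.finrank (ZMod 2) (dotOrthogonal W) = Fintype.card α := by
  have hker : LinearMap.ker (dotProductBilin (m := α) (A := ZMod 2) (ZMod 2) (ZMod 2)) = ⊥ :=
    LinearMap.ker_eq_bot'.2 fun f hf => dotProduct_eq_zero f (LinearMap.congr_fun hf)
  rw [dotOrthogonal, LinearMap.BilinForm.finrank_add_finrank_orthogonal', hker, inf_bot_eq,
    finrank_bot, add_zero, Module.finrank_fintype_fun_eq_card]

namespace IsPerfectMatching

theorem dotProduct_eq_zero {σ : Perm α} (hσ : IsPerfectMatching σ) {f g : α → ZMod 2}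
    (hf : ∀ x, f (σ x) = f x) (hg : ∀ x, g (σ x) = g x) : f ⬝ᵥ g = 0 :=
  Finset.sum_ninvolution σ (fun x => by rw [hf, hg, CharTwo.add_self_eq_zero])
    (fun x _ => hσ.apply_ne x) (fun _ => Finset.mem_univ _) hσ.apply_apply

theorem invariantFun_le_dotOrthogonal {σ : Perm α} (hσ : IsPerfectMatching σ)
    {S T : Set (Perm α)} (hS : σ ∈ S) (hT : σ ∈ T) :
    invariantFun S ≤ dotOrthogonal (invariantFun T) :=
  fun _ hf _ hg => hσ.dotProduct_eq_zero (hg σ hT) (hf σ hS)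

theorem card_le_two_mul_finrank {σ : Perm α} (hσ : IsPerfectMatching σ) :
    Fintype.card α ≤ 2 * Module.finrank (ZMod 2) (invariantFun {σ}) := by
  let L := LinearMap.id + LinearMap.funLeft (ZMod 2) (ZMod 2) σ
  have hker : LinearMap.ker L ≤ invariantFun {σ} := fun f hf =>
    mem_invariantFun_singleton.2 fun x => (CharTwo.add_eq_zero.1 (congrFun hf x)).symm
  have hrange : LinearMap.range L ≤ invariantFun {σ} := by
    rintro _ ⟨f, rfl⟩
    refine mem_invariantFun_singleton.2 fun x => ?_
    change f (σ x) + f (σ (σ x)) = f x + f (σ x)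
    rw [hσ.apply_apply, add_comm]
  have := L.finrank_range_add_finrank_ker
  rw [Module.finrank_fintype_fun_eq_card] at this
  have := Submodule.finrank_mono hker
  have := Submodule.finrank_mono hrange
  omega

theorem dotProduct_eq_card_div_two {σ : Perm α} (hσ : IsPerfectMatching σ) {f r : α → ZMod 2}
    (hf : ∀ x, f (σ x) = f x) (hr : ∀ x, r (σ x) = r x + 1) :
    f ⬝ᵥ r = ((Finset.univ.filter fun x => f x = 1).card / 2 : ℕ) := by
  have hmul : ∀ a b : ZMod 2, a * b = if a = 1 ∧ b = 1 then 1 else 0 := by decide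
  have hhalf := hσ.two_mul_card_filter hr (s := Finset.univ.filter fun x => f x = 1)
    (by simp [hf]) 1
  rw [← hhalf, Nat.mul_div_cancel_left _ two_pos, Finset.filter_filter, Finset.card_filter,
    dotProduct]
  push_cast
  exact Finset.sum_congr rfl fun x _ => hmul _ _

theorem add_mem_dotOrthogonal {σ τ : Perm α} (hσ : IsPerfectMatching σ)
    (hτ : IsPerfectMatching τ) {r t : α → ZMod 2} (hr : ∀ x, r (σ x) = r x + 1)
    (ht : ∀ x, t (τ x) = t x + 1) : r + t ∈ dotOrthogonal (invariantFun {σ, τ}) := by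
  intro f hf
  obtain ⟨hfσ, hfτ⟩ := mem_invariantFun_pair.1 hf
  change f ⬝ᵥ (r + t) = 0
  rw [dotProduct_add, hσ.dotProduct_eq_card_div_two hfσ hr, hτ.dotProduct_eq_card_div_two hfτ ht,
    CharTwo.add_self_eq_zero]

end IsPerfectMatching

end Fintype

end Invariants

/-- The number of cycles formed by alternating `σ` and `τ`. -/
noncomputable def numCycles {α : Type*} (σ τ : Perm α) : ℕ :=
  Nat.card (MulAction.orbitRel.Quotient (Subgroup.closure {σ, τ}) α)

section Gem

variable {α : Type*}

namespace IsPerfectMatching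

theorem exists_isAlternating_pair [Finite α] {σ τ : Perm α} (hσ : IsPerfectMatching σ)
    (hτ : IsPerfectMatching τ) : ∃ r : α → ZMod 2, IsAlternating {σ, τ} r := by
  have := Fintype.ofFinite α
  obtain ⟨r, hr⟩ := hσ.exists_isAlternating
  obtain ⟨t, ht⟩ := hτ.exists_isAlternating
  have hsup : invariantFun {σ} ⊔ invariantFun {τ} = dotOrthogonal (invariantFun {σ, τ}) := by
    refine Submodule.eq_of_le_of_finrank_le (sup_le
      (hσ.invariantFun_le_dotOrthogonal (by simp) (by simp))
      (hτ.invariantFun_le_dotOrthogonal (by simp) (by simp))) ?_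
    have hinf := Submodule.finrank_sup_add_finrank_inf_eq (invariantFun {σ}) (invariantFun {τ})
    rw [invariantFun_inf, Set.singleton_union] at hinf
    have := finrank_add_finrank_dotOrthogonal (invariantFun {σ, τ})
    have := hσ.card_le_two_mul_finrank
    have := hτ.card_le_two_mul_finrank
    omega
  exact hr.exists_union ht (hsup ▸ hσ.add_mem_dotOrthogonal hτ (hr σ rfl) (ht τ rfl))

variable [Fintype α] {σ₀ σ₁ σ₂ : Perm α} (h₀ : IsPerfectMatching σ₀) (h₁ : IsPerfectMatching σ₁)
  (h₂ : IsPerfectMatching σ₂)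

include h₀ h₁ h₂

theorem sup_le_dotOrthogonal_sup : invariantFun {σ₁, σ₂} ⊔ invariantFun {σ₀} ≤
    dotOrthogonal (invariantFun {σ₀, σ₁} ⊔ invariantFun {σ₀, σ₂}) :=
  sup_le
    (fun _ hf => mem_dotOrthogonal_sup.2
      ⟨h₁.invariantFun_le_dotOrthogonal (by simp) (by simp) hf,
        h₂.invariantFun_le_dotOrthogonal (by simp) (by simp) hf⟩)
    (fun _ hf => mem_dotOrthogonal_sup.2
      ⟨h₀.invariantFun_le_dotOrthogonal (by simp) (by simp) hf,
        h₀.invariantFun_le_dotOrthogonal (by simp) (by simp) hf⟩)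

variable [MulAction.IsPretransitive (Subgroup.closure {σ₀, σ₁, σ₂}) α]

omit h₁ h₂ in
theorem card_add_two_mul_numCycles_le :
    Fintype.card α + 2 * (numCycles σ₀ σ₁ + numCycles σ₀ σ₂ + numCycles σ₁ σ₂) ≤
      2 * (Module.finrank (ZMod 2) ↥(invariantFun {σ₁, σ₂} ⊔ invariantFun {σ₀}) +
        Module.finrank (ZMod 2) ↥(invariantFun {σ₀, σ₁} ⊔ invariantFun {σ₀, σ₂})) + 4 := by
  have hA : {σ₁, σ₂} ∪ {σ₀} = ({σ₀, σ₁, σ₂} : Set (Perm α)) := Set.union_singleton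
  have hB : {σ₀, σ₁} ∪ {σ₀, σ₂} = ({σ₀, σ₁, σ₂} : Set (Perm α)) := by grind
  have := finrank_invariantFun_add_le (S := {σ₁, σ₂}) (T := {σ₀}) (by rwa [hA])
  have := finrank_invariantFun_add_le (S := {σ₀, σ₁}) (T := {σ₀, σ₂}) (by rwa [hB])
  have := h₀.card_le_two_mul_finrank
  simp only [numCycles, ← finrank_invariantFun]
  omega

/-- This says that the genus of the surface obtained by gluing a disc to every bicolored cycle of
a connected properly 3-edge-colored cubic graph is nonnegative. -/
theorem two_mul_numCycles_le_card_add_four :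
    2 * (numCycles σ₀ σ₁ + numCycles σ₀ σ₂ + numCycles σ₁ σ₂) ≤ Fintype.card α + 4 := by
  have := h₀.card_add_two_mul_numCycles_le (σ₁ := σ₁) (σ₂ := σ₂)
  have := Submodule.finrank_mono (sup_le_dotOrthogonal_sup h₀ h₁ h₂)
  have := finrank_add_finrank_dotOrthogonal (invariantFun {σ₀, σ₁} ⊔ invariantFun {σ₀, σ₂})
  omega

/-- A sphere is orientable, so a planar properly 3-edge-colored cubic graph is bipartite. -/
theorem exists_isAlternating_of_planar
    (h : 2 * (numCycles σ₀ σ₁ + numCycles σ₀ σ₂ + numCycles σ₁ σ₂) = Fintype.card α + 4) :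
    ∃ s, IsAlternating {σ₀, σ₁, σ₂} s := by
  have hsup := Submodule.eq_of_le_of_finrank_le (sup_le_dotOrthogonal_sup h₀ h₁ h₂) <| by
    have := h₀.card_add_two_mul_numCycles_le (σ₁ := σ₁) (σ₂ := σ₂)
    have := finrank_add_finrank_dotOrthogonal (invariantFun {σ₀, σ₁} ⊔ invariantFun {σ₀, σ₂})
    omega
  obtain ⟨r, hr⟩ := h₁.exists_isAlternating_pair h₂
  obtain ⟨t, ht⟩ := h₀.exists_isAlternating
  rw [← Set.union_singleton]
  refine hr.exists_union ht (hsup ▸ mem_dotOrthogonal_sup.2 ⟨?_, ?_⟩)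
  · rw [Set.pair_comm]
    exact h₁.add_mem_dotOrthogonal h₀ (hr σ₁ (by simp)) (ht σ₀ rfl)
  · rw [Set.pair_comm]
    exact h₂.add_mem_dotOrthogonal h₀ (hr σ₂ (by simp)) (ht σ₀ rfl)

end IsPerfectMatching

end Gem

section Cycles

variable {α β : Type*}

theorem numCycles_eq_card {ι : Type*} {σ τ : Perm α} (φ : α → ι) (rep : ι → α)
    (hσ : ∀ x, φ (σ x) = φ x) (hτ : ∀ x, φ (τ x) = φ x) (hrep : ∀ i, φ (rep i) = i)
    (h : ∀ x, x = rep (φ x) ∨ x = σ (rep (φ x)) ∨ x = τ (rep (φ x)) ∨ x = σ (τ (rep (φ x)))) :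
    numCycles σ τ = Nat.card ι := by
  let H := Subgroup.closure {σ, τ}
  have hσH : σ ∈ H := Subgroup.subset_closure (by simp)
  have hτH : τ ∈ H := Subgroup.subset_closure (by simp)
  have hφ : ∀ x y, MulAction.orbitRel H α x y ↔ φ x = φ y := fun x y => by
    constructor
    · rintro ⟨g, rfl⟩
      exact apply_eq_of_mem_closure (S := {σ, τ}) (by simp [hσ, hτ]) g.2 y
    · have toRep : ∀ z, MulAction.orbitRel H α z (rep (φ z)) := fun z => by
        rcases h z with hz | hz | hz | hz
        · exact ⟨1, hz.symm⟩
        · exact ⟨⟨σ, hσH⟩, hz.symm⟩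
        · exact ⟨⟨τ, hτH⟩, hz.symm⟩
        · exact ⟨⟨σ * τ, mul_mem hσH hτH⟩, hz.symm⟩
      exact fun hxy => (MulAction.orbitRel H α).trans' (toRep x)
        (hxy ▸ (MulAction.orbitRel H α).symm' (toRep y))
  refine Nat.card_eq_of_bijective (fun q => Quotient.liftOn' q φ fun x y => (hφ x y).1) ⟨?_, ?_⟩
  · rintro ⟨x⟩ ⟨y⟩ hxy
    exact Quotient.sound' ((hφ x y).2 hxy)
  · exact fun i => ⟨Quotient.mk'' (rep i), hrep i⟩

section Finite

variable [Finite α] [Finite β]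

theorem numCycles_congr {σ τ : Perm α} {σ' τ' : Perm β} (e : α ≃ β)
    (hσ : ∀ x, e (σ x) = σ' (e x)) (hτ : ∀ x, e (τ x) = τ' (e x)) :
    numCycles σ τ = numCycles σ' τ' := by
  rw [numCycles, numCycles, ← finrank_invariantFun, ← finrank_invariantFun,
    ← (LinearEquiv.funCongrLeft (ZMod 2) (ZMod 2) e).finrank_map_eq (invariantFun {σ', τ'})]
  suffices h : invariantFun {σ, τ} = (invariantFun {σ', τ'}).map
      (LinearEquiv.funCongrLeft (ZMod 2) (ZMod 2) e : (β → ZMod 2) →ₗ[ZMod 2] α → ZMod 2) by rw [h]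
  ext f
  rw [Submodule.mem_map_equiv, mem_invariantFun_pair, mem_invariantFun_pair]
  simp [e.surjective.forall, ← hσ, ← hτ, LinearEquiv.funCongrLeft_symm, LinearMap.funLeft]

theorem numCycles_sumCongr (σ τ : Perm α) (σ' τ' : Perm β) :
    numCycles (σ.sumCongr σ') (τ.sumCongr τ') = numCycles σ τ + numCycles σ' τ' := by
  let L := LinearEquiv.sumArrowLequivProdArrow α β (ZMod 2) (ZMod 2)
  have hmap : (invariantFun {σ.sumCongr σ', τ.sumCongr τ'}).map (L : _ →ₗ[ZMod 2] _) =
      LinearMap.range ((invariantFun {σ, τ}).subtype.prodMap (invariantFun {σ', τ'}).subtype) := by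
    ext p
    rw [LinearMap.range_prodMap, Submodule.range_subtype, Submodule.range_subtype,
      Submodule.mem_map_equiv, Submodule.mem_prod]
    simp only [mem_invariantFun_pair, Sum.forall]
    exact and_and_and_comm
  simp only [numCycles, ← finrank_invariantFun]
  rw [← L.finrank_map_eq, hmap, LinearMap.finrank_range_of_inj
    (Subtype.val_injective.prodMap Subtype.val_injective), Module.finrank_prod]

end Finite

section ShortCycle

variable {σ τ : Perm α} (hσ : IsPerfectMatching σ) (hτ : IsPerfectMatching τ) {s : α → ZMod 2}
  (hsσ : ∀ x, s (σ x) = s x + 1) (hsτ : ∀ x, s (τ x) = s x)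

include hσ hτ hsσ hsτ

/-- The coloring `s` forces the number of vertices of a cycle alternating `σ` and `τ` to be a
multiple of four. -/
theorem IsPerfectMatching.eight_le_card {t : Finset α} (htσ : ∀ x ∈ t, σ x ∈ t)
    (htτ : ∀ x ∈ t, τ x ∈ t) {v : α} (hv : v ∈ t) (hne : σ (τ v) ≠ τ (σ v)) : 8 ≤ t.card := by
  classical
  have hhalf := hσ.two_mul_card_filter hsσ htσ (s v)
  have hsub : {v, τ v, σ (τ (σ v)), σ (τ (σ (τ v)))} ⊆ t.filter fun x => s x = s v := by
    have step : ∀ x ∈ t, σ (τ (σ x)) ∈ t := fun x hx => htσ _ (htτ _ (htσ x hx))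
    simp [Finset.insert_subset_iff, hsσ, hsτ, hv, htτ, step, add_assoc, CharTwo.add_self_eq_zero]
  have hcard : ({v, τ v, σ (τ (σ v)), σ (τ (σ (τ v)))} : Finset α).card = 4 := by
    have h₁ : v ≠ τ v := (hτ.apply_ne v).symm
    have h₂ : v ≠ σ (τ (σ v)) := fun h => hτ.apply_ne (σ v) <| by
      rw [← hσ.apply_apply (τ (σ v)), ← h]
    have h₃ : v ≠ σ (τ (σ (τ v))) := fun h => hne <| by
      rw [h, hσ.apply_apply, hτ.apply_apply, ← h]
    have h₄ : τ v ≠ σ (τ (σ v)) := fun h => hne <| by rw [h, hσ.apply_apply]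
    have h₅ : τ v ≠ σ (τ (σ (τ v))) := fun h => hτ.apply_ne (σ (τ v)) <| by
      rw [← hσ.apply_apply (τ (σ (τ v))), ← h]
    have h₆ : σ (τ (σ v)) ≠ σ (τ (σ (τ v))) := by simpa using h₁
    simp [Finset.card_insert_of_notMem, h₁, h₂, h₃, h₄, h₅, h₆]
  have := Finset.card_le_card hsub
  omega

theorem IsPerfectMatching.exists_commute_of_card_lt [Fintype α]
    (h : Fintype.card α < 8 * numCycles σ τ) : ∃ v, σ (τ v) = τ (σ v) := by
  classical
  let H := Subgroup.closure {σ, τ}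
  have := Fintype.ofFinite (MulAction.orbitRel.Quotient H α)
  obtain ⟨q, hq⟩ := Fintype.exists_card_fiber_lt_of_card_lt_mul
    (f := (Quotient.mk'' : α → MulAction.orbitRel.Quotient H α)) (n := 8) <| by
      rwa [numCycles, Nat.card_eq_fintype_card, mul_comm] at h
  obtain ⟨v, rfl⟩ := Quotient.mk''_surjective q
  by_contra! hne
  have orbit_mem : ∀ ρ ∈ ({σ, τ} : Set (Perm α)), ∀ x,
      (Quotient.mk'' (ρ x) : MulAction.orbitRel.Quotient H α) = Quotient.mk'' x :=
    fun ρ hρ x => Quotient.sound' ⟨⟨ρ, Subgroup.subset_closure hρ⟩, rfl⟩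
  refine hq.not_ge (hσ.eight_le_card hτ hsσ hsτ ?_ ?_ (by simp) (hne v))
  · simp [orbit_mem σ]
  · simp [orbit_mem τ]

end ShortCycle

section Flip

variable [DecidableEq α]

/-- The matching obtained from the matching `σ` by replacing the edges `u — σ u` and `w — σ w` by
`u — w` and `σ u — σ w`. -/
def flipPerm (σ : Perm α) (u w : α) : Perm α :=
  swap (σ u) w * σ * swap (σ u) w

variable {σ τ : Perm α} {u w : α}

theorem apply_flipPerm {ι : Type*} {f : α → ι} (hf : ∀ x, f (σ x) = f x) (huw : f u = f w)
    (x : α) : f (flipPerm σ u w x) = f x := by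
  have hswap := apply_swap_eq_self ((hf u).trans huw)
  rw [flipPerm, Perm.mul_apply, Perm.mul_apply, hswap, hf, hswap]

theorem mem_invariantFun_flipPerm {f : α → ZMod 2} (hf : f ∈ invariantFun {σ})
    (huw : f u = f w) : f ∈ invariantFun {flipPerm σ u w} :=
  mem_invariantFun_singleton.2 (apply_flipPerm (mem_invariantFun_singleton.1 hf) huw)

variable (hσ : IsPerfectMatching σ)

include hσ

theorem IsPerfectMatching.flipPerm : IsPerfectMatching (flipPerm σ u w) where
  apply_apply x := by simp [_root_.flipPerm, hσ.apply_apply]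
  apply_ne x h := hσ.apply_ne (swap (σ u) w x) (by
    simpa [_root_.flipPerm] using congrArg (swap (σ u) w) h)

theorem flipPerm_apply (huw : u ≠ w) (x : α) :
    flipPerm σ u w x =
      if x = u then w else if x = w then u else if x = σ u then σ w else if x = σ w then σ u
      else σ x := by
  have hσσ := hσ.apply_apply
  have hne := hσ.apply_ne
  simp only [flipPerm, Perm.mul_apply, swap_apply_def]
  grind

theorem flipPerm_apply_self (huw : u ≠ w) : flipPerm σ u w u = w := by
  rw [flipPerm_apply hσ huw, if_pos rfl]

theorem flipPerm_flipPerm (huw : u ≠ w) : flipPerm (flipPerm σ u w) u (σ u) = σ := by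
  ext x
  rw [flipPerm, flipPerm_apply_self hσ huw, swap_comm]
  simp [flipPerm]

theorem single_add_single_mem_invariantFun :
    (Pi.single u 1 + Pi.single (σ u) 1 : α → ZMod 2) ∈ invariantFun {σ} := by
  refine mem_invariantFun_singleton.2 fun x => ?_
  have hxu : σ x = u ↔ x = σ u :=
    ⟨fun h => by rw [← h, hσ.apply_apply], fun h => by rw [h, hσ.apply_apply]⟩
  simp [Pi.single_apply, hxu, σ.injective.eq_iff, add_comm]

variable [Finite α] (hτ : IsPerfectMatching τ)

include hτ

theorem mem_invariantFun_flipPerm_iff {f g : α → ZMod 2} (hf : f ∈ invariantFun {σ, τ})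
    (hfuw : f u ≠ f w) :
    g ∈ invariantFun {flipPerm σ u w, τ} ↔ g ∈ invariantFun {σ, τ} ∧ g u = g w := by
  have := Fintype.ofFinite α
  have huw : u ≠ w := fun h => hfuw (congrArg f h)
  rw [mem_invariantFun_insert] at hf
  rw [mem_invariantFun_insert, mem_invariantFun_insert]
  refine ⟨fun ⟨hgσ, hgτ⟩ => ?_, fun ⟨⟨hgσ, hgτ⟩, hg⟩ => ⟨mem_invariantFun_flipPerm hgσ hg, hgτ⟩⟩
  have hguw : g u = g w := by
    simpa [flipPerm_apply_self hσ huw] using (hgσ (flipPerm σ u w) rfl u).symm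
  refine ⟨⟨?_, hgτ⟩, hguw⟩
  suffices hg : g u = g (σ u) by
    simpa only [flipPerm_flipPerm hσ huw] using mem_invariantFun_flipPerm hgσ hg
  let f' := f + (Pi.single u 1 + Pi.single (σ u) 1)
  have hf' : f' ∈ invariantFun {flipPerm σ u w} := by
    refine mem_invariantFun_flipPerm (add_mem hf.1 (single_add_single_mem_invariantFun hσ)) ?_
    have hσuw : σ u ≠ w := fun h => hfuw (by rw [← h, hf.1 σ rfl])
    have hne : ∀ a b : ZMod 2, a ≠ b → a + 1 = b := by decide
    simpa [f', Pi.single_apply, (hσ.apply_ne u).symm, huw.symm, hσuw.symm] using hne _ _ hfuw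
  have hgf : g ⬝ᵥ f = 0 := hτ.dotProduct_eq_zero (hgτ τ rfl) (hf.2 τ rfl)
  have hgf' : g ⬝ᵥ f' = 0 := hσ.flipPerm.dotProduct_eq_zero (hgσ _ rfl) (hf' _ rfl)
  rw [dotProduct_add, hgf, zero_add, dotProduct_add, dotProduct_single_one,
    dotProduct_single_one] at hgf'
  exact CharTwo.add_eq_zero.1 hgf'

theorem numCycles_flipPerm_add_one {f : α → ZMod 2} (hf : f ∈ invariantFun {σ, τ})
    (hfuw : f u ≠ f w) : numCycles (flipPerm σ u w) τ + 1 = numCycles σ τ := by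
  let eval (x : α) : Module.Dual (ZMod 2) (α → ZMod 2) := LinearMap.proj x
  let δ := eval u - eval w
  have hδ : δ.domRestrict (invariantFun {σ, τ}) ≠ 0 := fun h =>
    hfuw (sub_eq_zero.1 (LinearMap.congr_fun h ⟨f, hf⟩))
  have hflip : invariantFun {flipPerm σ u w, τ} = invariantFun {σ, τ} ⊓ LinearMap.ker δ :=
    Submodule.ext fun g => (mem_invariantFun_flipPerm_iff hσ hτ hf hfuw).trans
      (and_congr_right' sub_eq_zero.symm)
  rw [numCycles, numCycles, ← finrank_invariantFun, ← finrank_invariantFun, hflip,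
    ← Module.Dual.finrank_ker_add_one_of_ne_zero hδ, LinearMap.ker_domRestrict,
    ← Submodule.map_comap_subtype, Submodule.finrank_map_subtype_eq]

theorem numCycles_le_numCycles_flipPerm_add_one :
    numCycles σ τ ≤ numCycles (flipPerm σ u w) τ + 1 := by
  by_cases h : ∃ f ∈ invariantFun {σ, τ}, f u ≠ f w
  · obtain ⟨f, hf, hfuw⟩ := h
    exact (numCycles_flipPerm_add_one hσ hτ hf hfuw).ge
  · push Not at h
    simp only [numCycles, ← finrank_invariantFun]
    refine (Submodule.finrank_mono fun f hf => ?_).trans (Nat.le_succ _)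
    have hfuw := h f hf
    rw [mem_invariantFun_insert] at hf ⊢
    exact ⟨mem_invariantFun_flipPerm hf.1 hfuw, hf.2⟩

theorem numCycles_add_one_eq_numCycles_flipPerm (huw : u ≠ w) (hσuw : σ u ≠ w)
    (h : σ (τ u) = τ w) : numCycles σ τ + 1 = numCycles (flipPerm σ u w) τ := by
  have hτuw : τ u ≠ w := fun e => hσuw <| by
    rw [← hτ.apply_apply u, e, ← h, e, hσ.apply_apply]
  have hτu : σ u ≠ τ u := fun e => hτuw <| by
    rw [← hτ.apply_apply w, ← h, ← e, hσ.apply_apply, e]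
  have hτw : σ u ≠ τ w := fun e => hτ.apply_ne u (σ.injective (h.trans e.symm))
  have hσ' : IsPerfectMatching (flipPerm σ u w) := hσ.flipPerm
  have hu : flipPerm σ u w u = w := flipPerm_apply_self hσ huw
  have hτu' : flipPerm σ u w (τ u) = τ w := by
    rw [flipPerm, Perm.mul_apply, Perm.mul_apply, swap_apply_of_ne_of_ne hτu.symm hτuw, h,
      swap_apply_of_ne_of_ne hτw.symm (hτ.apply_ne w)]
  let f : α → ZMod 2 := (Pi.single u 1 + Pi.single w 1) + (Pi.single (τ u) 1 + Pi.single (τ w) 1)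
  have hf : f ∈ invariantFun {flipPerm σ u w, τ} := by
    refine mem_invariantFun_insert.2 ⟨add_mem ?_ ?_, ?_⟩
    · simpa only [hu] using single_add_single_mem_invariantFun hσ' (u := u)
    · simpa only [hτu'] using single_add_single_mem_invariantFun hσ' (u := τ u)
    · rw [show f = _ from add_add_add_comm _ _ _ _]
      exact add_mem (single_add_single_mem_invariantFun hτ) (single_add_single_mem_invariantFun hτ)
  have hfu : f u ≠ f (σ u) := by
    have huτw : u ≠ τ w := fun e => hτuw (by rw [e, hτ.apply_apply])
    simp [f, huw, huτw, hσ.apply_ne, hτu, hτw, hσuw, (hτ.apply_ne u).symm]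
  rw [← numCycles_flipPerm_add_one hσ' hτ hf hfu, flipPerm_flipPerm hσ huw]

end Flip

end Cycles

/-- The color different from both `c` and `d`, provided that `c ≠ d`. -/
def thirdColor (c d : Fin 3) : Fin 3 :=
  -(c + d)

theorem bubblePerm_isPerfectMatching (c : Fin 3) : IsPerfectMatching (bubblePerm c) where
  apply_apply := by decide +revert
  apply_ne := by decide +revert

theorem bubblePerm_bubblePerm_of_ne {c d : Fin 3} (hcd : c ≠ d) (k : Fin 4) :
    bubblePerm c (bubblePerm d k) = bubblePerm (thirdColor c d) k := by
  decide +revert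

theorem bubblePerm_comm (c d : Fin 3) (k : Fin 4) :
    bubblePerm c (bubblePerm d k) = bubblePerm d (bubblePerm c k) := by
  decide +revert

theorem eq_or_exists_bubblePerm (j k : Fin 4) : k = j ∨ ∃ c, k = bubblePerm c j := by
  decide +revert

theorem eq_or_eq_thirdColor {c d : Fin 3} (hcd : c ≠ d) (e : Fin 3) :
    e = c ∨ e = d ∨ e = thirdColor c d := by
  decide +revert

namespace TGraph

section Basic

variable (G : TGraph)

theorem pairing_isPerfectMatching : IsPerfectMatching G.pairing :=
  ⟨G.invol, G.fixfree⟩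

theorem colPerm_isPerfectMatching (c : Fin 3) : IsPerfectMatching (G.colPerm c) where
  apply_apply v := Prod.ext rfl ((bubblePerm_isPerfectMatching c).apply_apply v.2)
  apply_ne v h := (bubblePerm_isPerfectMatching c).apply_ne v.2 (congrArg Prod.snd h)

theorem colPerm_colPerm_of_ne {c d : Fin 3} (hcd : c ≠ d) (v : G.V) :
    G.colPerm c (G.colPerm d v) = G.colPerm (thirdColor c d) v :=
  Prod.ext rfl (bubblePerm_bubblePerm_of_ne hcd v.2)

theorem colPerm_comm (c d : Fin 3) (v : G.V) :
    G.colPerm c (G.colPerm d v) = G.colPerm d (G.colPerm c v) :=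
  Prod.ext rfl (bubblePerm_comm c d v.2)

variable {G} in
theorem eq_or_exists_eq_colPerm {v w : G.V} (h : w.1 = v.1) :
    w = v ∨ ∃ c, w = G.colPerm c v :=
  (eq_or_exists_bubblePerm v.2 w.2).imp (Prod.ext h) fun ⟨c, hc⟩ => ⟨c, Prod.ext h hc⟩

theorem card_V : Fintype.card G.V = 4 * G.b := by
  rw [Fintype.card_prod, Fintype.card_fin, mul_comm, b]

theorem numFaces_eq_numCycles (c : Fin 3) : G.numFaces c = numCycles G.pairing (G.colPerm c) :=
  rfl

theorem F_eq_of_ne {c d : Fin 3} (hcd : c ≠ d) :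
    G.F = G.numFaces c + G.numFaces d + G.numFaces (thirdColor c d) := by
  have hsum : ∀ c d : Fin 3, c ≠ d → (Finset.univ : Finset (Fin 3)) = {c, d, thirdColor c d} ∧
    thirdColor c d ≠ c ∧ thirdColor c d ≠ d := by decide
  obtain ⟨huniv, hc, hd⟩ := hsum c d hcd
  rw [F, huniv, Finset.sum_insert (by simp [hcd, hc.symm]), Finset.sum_pair hd.symm, add_assoc]

theorem numCycles_colPerm {c d : Fin 3} (hcd : c ≠ d) :
    numCycles (G.colPerm c) (G.colPerm d) = G.b := by
  rw [b, ← Nat.card_eq_fintype_card]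
  refine numCycles_eq_card Prod.fst (fun i => (i, 0)) (fun _ => rfl) (fun _ => rfl)
    (fun _ => rfl) ?_
  rintro ⟨i, k⟩
  have hk : k = 0 ∨ k = bubblePerm c 0 ∨ k = bubblePerm d 0 ∨
      k = bubblePerm c (bubblePerm d 0) := by
    decide +revert
  exact hk.imp (Prod.ext rfl) (Or.imp (Prod.ext rfl) (Or.imp (Prod.ext rfl) (Prod.ext rfl)))

end Basic

section Connectivity

variable {G : TGraph}

/-- A set of bubbles that no color-0 edge leaves, i.e. a union of connected components. -/
def IsStable (G : TGraph) (S : Set G.B) : Prop :=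
  ∀ v, (G.pairing v).1 ∈ S ↔ v.1 ∈ S

theorem IsStable.of_imp {S : Set G.B} (h : ∀ v, v.1 ∈ S → (G.pairing v).1 ∈ S) : G.IsStable S :=
  fun v => ⟨fun hv => G.invol v ▸ h _ hv, h v⟩

theorem IsStable.compl {S : Set G.B} (h : G.IsStable S) : G.IsStable Sᶜ :=
  fun v => not_congr (h v)

theorem Connected.apply_eq (hG : G.Connected) {β : Type*} {f : G.V → β}
    (hp : ∀ v, f (G.pairing v) = f v) (hc : ∀ c v, f (G.colPerm c v) = f v) (u v : G.V) :
    f u = f v := by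
  obtain ⟨⟨g, hg⟩, rfl⟩ := hG u v
  refine apply_eq_of_mem_closure ?_ hg v
  rintro σ (rfl | ⟨c, rfl⟩)
  exacts [hp, hc c]

theorem connected_iff_isStable :
    G.Connected ↔ ∀ S, G.IsStable S → S.Nonempty → S = Set.univ := by
  constructor
  · rintro hG S hS ⟨i, hi⟩
    refine Set.eq_univ_of_forall fun j => ?_
    exact (hG.apply_eq (f := fun v : G.V => v.1 ∈ S) (fun v => propext (hS v)) (fun _ _ => rfl)
      (i, 0) (j, 0)).mp hi
  · intro h u v
    have mem_orbit : ∀ σ ∈ ({G.pairing} ∪ Set.range G.colPerm : Set _), ∀ x,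
        x ∈ MulAction.orbit G.fullGroup v → σ x ∈ MulAction.orbit G.fullGroup v :=
      fun σ hσ x hx => MulAction.mem_orbit_of_mem_orbit
        (⟨σ, Subgroup.subset_closure hσ⟩ : G.fullGroup) hx
    have of_bubble : ∀ x : G.V, x.1 ∈ Prod.fst '' MulAction.orbit G.fullGroup v →
        x ∈ MulAction.orbit G.fullGroup v := by
      rintro x ⟨y, hy, hyx⟩
      obtain rfl | ⟨c, rfl⟩ := eq_or_exists_eq_colPerm hyx.symm
      exacts [hy, mem_orbit _ (Or.inr ⟨c, rfl⟩) _ hy]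
    have hS : G.IsStable (Prod.fst '' MulAction.orbit G.fullGroup v) := .of_imp fun x hx =>
      Set.mem_image_of_mem _ (mem_orbit _ (Or.inl rfl) _ (of_bubble x hx))
    have huniv := h _ hS ⟨v.1, v, MulAction.mem_orbit_self v, rfl⟩
    exact of_bubble u (huniv.ge (Set.mem_univ u.1))

theorem Connected.isPretransitive (hG : G.Connected) {c d : Fin 3} (hcd : c ≠ d) :
    MulAction.IsPretransitive (Subgroup.closure {G.pairing, G.colPerm c, G.colPerm d}) G.V := by
  have hle : G.fullGroup ≤ Subgroup.closure {G.pairing, G.colPerm c, G.colPerm d} := by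
    rw [fullGroup, Subgroup.closure_le]
    have hc : G.colPerm c ∈ Subgroup.closure {G.pairing, G.colPerm c, G.colPerm d} :=
      Subgroup.subset_closure (by simp)
    have hd : G.colPerm d ∈ Subgroup.closure {G.pairing, G.colPerm c, G.colPerm d} :=
      Subgroup.subset_closure (by simp)
    rintro σ (rfl | ⟨e, rfl⟩)
    · exact Subgroup.subset_closure (by simp)
    · obtain rfl | rfl | rfl := eq_or_eq_thirdColor hcd e
      · exact hc
      · exact hd
      · rw [← show G.colPerm c * G.colPerm d = _ from Perm.ext (G.colPerm_colPerm_of_ne hcd)]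
        exact mul_mem hc hd
  refine ⟨fun u v => ?_⟩
  obtain ⟨⟨g, hg⟩, hgu⟩ := hG v u
  exact ⟨⟨g, hle hg⟩, hgu⟩

end Connectivity

section Jackets

variable {G : TGraph} (hG : G.Connected)

include hG

theorem Connected.numFaces_add_numFaces_le {c d : Fin 3} (hcd : c ≠ d) :
    G.numFaces c + G.numFaces d ≤ G.b + 2 := by
  have := hG.isPretransitive hcd
  have := G.pairing_isPerfectMatching.two_mul_numCycles_le_card_add_four
    (G.colPerm_isPerfectMatching c) (G.colPerm_isPerfectMatching d)
  rw [numCycles_colPerm G hcd, card_V, ← numFaces_eq_numCycles, ← numFaces_eq_numCycles] at this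
  omega

theorem Connected.two_mul_F_le : 2 * G.F ≤ 3 * G.b + 6 := by
  have := hG.numFaces_add_numFaces_le (c := 0) (d := 1) (by decide)
  have := hG.numFaces_add_numFaces_le (c := 0) (d := 2) (by decide)
  have := hG.numFaces_add_numFaces_le (c := 1) (d := 2) (by decide)
  rw [F, Fin.sum_univ_three]
  omega

theorem Connected.exists_pairing_colPerm_of_planar {c d : Fin 3} (hcd : c ≠ d)
    (hplanar : G.numFaces c + G.numFaces d = G.b + 2)
    (hlt : G.b < 2 * G.numFaces (thirdColor c d)) :
    ∃ v, G.pairing (G.colPerm (thirdColor c d) v) = G.colPerm (thirdColor c d) (G.pairing v) := by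
  have := hG.isPretransitive hcd
  obtain ⟨s, hs⟩ := G.pairing_isPerfectMatching.exists_isAlternating_of_planar
    (G.colPerm_isPerfectMatching c) (G.colPerm_isPerfectMatching d) <| by
      rw [numCycles_colPerm G hcd, card_V, ← numFaces_eq_numCycles, ← numFaces_eq_numCycles]
      omega
  refine G.pairing_isPerfectMatching.exists_commute_of_card_lt
    (G.colPerm_isPerfectMatching _) (s := s) (hs _ (by simp)) (fun v => ?_) ?_
  · rw [← colPerm_colPerm_of_ne G hcd, hs (G.colPerm c) (by simp), hs (G.colPerm d) (by simp),
      add_assoc, CharTwo.add_self_eq_zero, add_zero]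
  · rw [card_V, ← numFaces_eq_numCycles]
    omega

theorem Connected.exists_pairing_colPerm (hF : 3 * G.b + 5 ≤ 2 * G.F) :
    ∃ c v, G.pairing (G.colPerm c v) = G.colPerm c (G.pairing v) := by
  suffices h : ∃ c d : Fin 3, c ≠ d ∧ G.numFaces c + G.numFaces d = G.b + 2 by
    obtain ⟨c, d, hcd, hplanar⟩ := h
    exact ⟨_, hG.exists_pairing_colPerm_of_planar hcd hplanar
      (by rw [F_eq_of_ne G hcd] at hF; omega)⟩
  have h₀₁ := hG.numFaces_add_numFaces_le (c := 0) (d := 1) (by decide)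
  have h₀₂ := hG.numFaces_add_numFaces_le (c := 0) (d := 2) (by decide)
  have h₁₂ := hG.numFaces_add_numFaces_le (c := 1) (d := 2) (by decide)
  rw [F, Fin.sum_univ_three] at hF
  by_cases h : G.numFaces 0 + G.numFaces 1 = G.b + 2
  · exact ⟨0, 1, by decide, h⟩
  · exact ⟨0, 2, by decide, by omega⟩

end Jackets

section Flip

variable {G : TGraph}

theorem numFaces_flip (u w : G.V) (c : Fin 3) :
    (G.flip u w).numFaces c = numCycles (flipPerm G.pairing u w) (G.colPerm c) :=
  rfl

theorem IsStable.of_flip {u w : G.V} {S : Set G.B} (huw : u ≠ w) (hS : (G.flip u w).IsStable S)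
    (hu : (G.pairing u).1 ∈ S ↔ u.1 ∈ S) : G.IsStable S := by
  intro v
  rw [← flipPerm_flipPerm G.pairing_isPerfectMatching huw]
  exact (apply_flipPerm (f := fun x : G.V => x.1 ∈ S) (fun x => propext (hS x))
    (propext hu.symm) v).to_iff

theorem F_lt_F_flip {c d : Fin 3} (hcd : c ≠ d) {v : G.V}
    (hc : G.pairing (G.colPerm c v) = G.colPerm c (G.pairing v))
    (hd : G.pairing (G.colPerm d v) ≠ G.colPerm d (G.pairing v)) :
    G.F < (G.flip (G.colPerm d v) (G.colPerm d (G.pairing v))).F := by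
  have hpair := G.pairing_isPerfectMatching
  have hne : G.colPerm d v ≠ G.colPerm d (G.pairing v) := fun h =>
    G.fixfree v ((G.colPerm d).injective h).symm
  have third : ∀ x : G.V, G.colPerm (thirdColor c d) (G.colPerm d x) = G.colPerm c x := fun x => by
    rw [← colPerm_colPerm_of_ne G hcd, (G.colPerm_isPerfectMatching d).apply_apply]
  have hloss := numCycles_le_numCycles_flipPerm_add_one hpair (G.colPerm_isPerfectMatching c)
    (u := G.colPerm d v) (w := G.colPerm d (G.pairing v))
  have hgain := numCycles_add_one_eq_numCycles_flipPerm hpair (G.colPerm_isPerfectMatching d) hne hd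
    (by simp only [(G.colPerm_isPerfectMatching d).apply_apply])
  have hgain' := numCycles_add_one_eq_numCycles_flipPerm hpair
    (G.colPerm_isPerfectMatching (thirdColor c d)) hne hd (by rw [third, third, hc])
  rw [F_eq_of_ne G hcd, F_eq_of_ne _ hcd, numFaces_flip, numFaces_flip, numFaces_flip]
  simp only [numFaces_eq_numCycles]
  omega

end Flip

section Iso

variable {G H K : TGraph}

/-- The identity isomorphism. -/
def Iso.refl (G : TGraph) : Iso G G :=
  ⟨Equiv.refl _, fun _ => rfl, fun _ _ => rfl⟩

/-- The inverse of an isomorphism. -/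
def Iso.symm (e : Iso G H) : Iso H G where
  toEquiv := e.toEquiv.symm
  map_pairing v := by rw [symm_apply_eq, e.map_pairing, apply_symm_apply]
  map_col c v := by rw [symm_apply_eq, e.map_col, apply_symm_apply]

/-- The composition of two isomorphisms. -/
def Iso.trans (e : Iso G H) (f : Iso H K) : Iso G K where
  toEquiv := e.toEquiv.trans f.toEquiv
  map_pairing v := by simp only [trans_apply, e.map_pairing, f.map_pairing]
  map_col c v := by simp only [trans_apply, e.map_col, f.map_col]

theorem IsIso.refl (G : TGraph) : IsIso G G :=
  ⟨.refl G⟩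

theorem IsIso.symm : IsIso G H → IsIso H G :=
  fun ⟨e⟩ => ⟨e.symm⟩

theorem IsIso.trans : IsIso G H → IsIso H K → IsIso G K :=
  fun ⟨e⟩ ⟨f⟩ => ⟨e.trans f⟩

theorem IsIso.b_eq : IsIso G H → G.b = H.b := fun ⟨e⟩ => by
  have := Fintype.card_congr e.toEquiv
  rw [card_V, card_V] at this
  omega

theorem IsIso.F_eq : IsIso G H → G.F = H.F := fun ⟨e⟩ =>
  Finset.sum_congr rfl fun c _ => numCycles_congr e.toEquiv e.map_pairing (e.map_col c)

/-- Isomorphic graphs have isomorphic flips. -/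
def Iso.flip (e : Iso G H) (u w : G.V) :
    Iso (G.flip u w) (H.flip (e.toEquiv u) (e.toEquiv w)) where
  toEquiv := e.toEquiv
  map_pairing := by
    have hswap : ∀ x, e.toEquiv (swap (G.pairing u) w x) =
        swap (H.pairing (e.toEquiv u)) (e.toEquiv w) (e.toEquiv x) := fun x => by
      rw [← e.map_pairing, e.toEquiv.injective.swap_apply]
    have hflip : ∀ v, e.toEquiv (flipPerm G.pairing u w v) =
        flipPerm H.pairing (e.toEquiv u) (e.toEquiv w) (e.toEquiv v) := fun v => by
      simp only [flipPerm, Perm.mul_apply, hswap, e.map_pairing]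
    exact hflip
  map_col := e.map_col

theorem isIso_flip_flip {u w : G.V} (huw : u ≠ w) :
    IsIso G ((G.flip u w).flip u (G.pairing u)) :=
  have h := flipPerm_flipPerm G.pairing_isPerfectMatching huw
  ⟨Equiv.refl _, fun v => (Perm.congr_fun h v).symm, fun _ _ => rfl⟩

end Iso

section DisjUnion

/-- The disjoint union of two graphs. -/
def disjUnion (H K : TGraph) : TGraph where
  B := H.B ⊕ K.B
  pairing := (sumProdDistrib H.B K.B (Fin 4)).symm.permCongr (H.pairing.sumCongr K.pairing)
  invol := by rintro ⟨i | i, k⟩ <;> simp [Equiv.permCongr_apply, H.invol, K.invol]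
  fixfree := by
    rintro ⟨i | i, k⟩ h
    exacts [H.fixfree _ (inlV_injective H K h), K.fixfree _ (inrV_injective H K h)]

variable (H K : TGraph)

theorem disjUnion_pairing_inlV (x : H.V) :
    (disjUnion H K).pairing (inlV H K x) = inlV H K (H.pairing x) :=
  rfl

theorem disjUnion_pairing_inrV (y : K.V) :
    (disjUnion H K).pairing (inrV H K y) = inrV H K (K.pairing y) :=
  rfl

theorem numFaces_disjUnion (c : Fin 3) :
    (disjUnion H K).numFaces c = H.numFaces c + K.numFaces c := by
  rw [numFaces_eq_numCycles, numFaces_eq_numCycles, numFaces_eq_numCycles, ← numCycles_sumCongr]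
  refine numCycles_congr (sumProdDistrib H.B K.B (Fin 4)) (fun x => ?_) fun x => ?_
  · exact apply_symm_apply _ _
  · rcases x with ⟨i | i, k⟩ <;> rfl

theorem forall_sum_V {P : (H.B ⊕ K.B) × Fin 4 → Prop} :
    (∀ z, P z) ↔ (∀ x, P (inlV H K x)) ∧ ∀ y, P (inrV H K y) :=
  (sumProdDistrib H.B K.B (Fin 4)).symm.surjective.forall.trans Sum.forall

theorem glueFun_eq_flipPerm {ρ : Perm ((H.B ⊕ K.B) × Fin 4)} (hρ : IsPerfectMatching ρ)
    (hl : ∀ x, ρ (inlV H K x) = inlV H K (H.pairing x))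
    (hr : ∀ y, ρ (inrV H K y) = inrV H K (K.pairing y)) (p : H.V) (q : K.V)
    (z : (H.B ⊕ K.B) × Fin 4) :
    glueFun H K p q z = flipPerm ρ (inlV H K p) (inrV H K q) z := by
  rw [flipPerm_apply hρ (inlV_ne_inrV H K p q)]
  revert z
  have hlr := inlV_ne_inrV H K
  have hrl := fun x y => (hlr x y).symm
  refine (forall_sum_V H K).2 ⟨fun x => ?_, fun y => ?_⟩
  · simp only [glueFun_inlV, hl, hr, (inlV_injective H K).eq_iff, hlr, if_false]
  · simp only [glueFun_inrV, hl, hr, (inrV_injective H K).eq_iff, hrl, if_false]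

theorem isIso_glue_flip_disjUnion (p : H.V) (q : K.V) :
    IsIso (glue H K p q) ((disjUnion H K).flip (inlV H K p) (inrV H K q)) :=
  ⟨Equiv.refl _, glueFun_eq_flipPerm H K (disjUnion H K).pairing_isPerfectMatching
    (disjUnion_pairing_inlV H K) (disjUnion_pairing_inrV H K) p q, fun _ _ => rfl⟩

end DisjUnion

section Glue

variable {H K L : TGraph} (p : H.V) (q : K.V)

/-- The embedding `inlV` with the vertices of the glued graph as codomain. -/
def glueInl : H.V → (glue H K p q).V :=
  inlV H K

/-- The embedding `inrV` with the vertices of the glued graph as codomain. -/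
def glueInr : K.V → (glue H K p q).V :=
  inrV H K

variable {p q}

theorem glueInl_inj {x y : H.V} : glueInl p q x = glueInl p q y ↔ x = y :=
  (inlV_injective H K).eq_iff

theorem glueInr_inj {x y : K.V} : glueInr p q x = glueInr p q y ↔ x = y :=
  (inrV_injective H K).eq_iff

theorem glueInl_ne_glueInr (x : H.V) (y : K.V) : glueInl p q x ≠ glueInr p q y :=
  inlV_ne_inrV H K x y

theorem glue_pairing_glueInl_left : (glue H K p q).pairing (glueInl p q p) = glueInr p q q :=
  (glueFun_inlV H K p q p).trans (if_pos rfl)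

theorem glue_pairing_glueInl_pairing :
    (glue H K p q).pairing (glueInl p q (H.pairing p)) = glueInr p q (K.pairing q) :=
  (glueFun_inlV H K p q _).trans ((if_neg (H.fixfree p)).trans (if_pos rfl))

theorem glue_pairing_glueInl_of_ne {x : H.V} (h : x ≠ p) (h' : x ≠ H.pairing p) :
    (glue H K p q).pairing (glueInl p q x) = glueInl p q (H.pairing x) :=
  (glueFun_inlV H K p q x).trans ((if_neg h).trans (if_neg h'))

theorem glue_pairing_glueInr_right : (glue H K p q).pairing (glueInr p q q) = glueInl p q p := by
  rw [← glue_pairing_glueInl_left, (glue H K p q).invol]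

theorem glue_pairing_glueInr_pairing :
    (glue H K p q).pairing (glueInr p q (K.pairing q)) = glueInl p q (H.pairing p) := by
  rw [← glue_pairing_glueInl_pairing, (glue H K p q).invol]

theorem glue_pairing_glueInr_of_ne {y : K.V} (h : y ≠ q) (h' : y ≠ K.pairing q) :
    (glue H K p q).pairing (glueInr p q y) = glueInr p q (K.pairing y) :=
  (glueFun_inrV H K p q y).trans ((if_neg h).trans (if_neg h'))

theorem forall_glue_V {P : (glue H K p q).V → Prop} :
    (∀ z, P z) ↔ (∀ x, P (glueInl p q x)) ∧ ∀ y, P (glueInr p q y) :=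
  forall_sum_V H K

variable (p q)

theorem b_glue : (glue H K p q).b = H.b + K.b :=
  Fintype.card_sum

theorem numFaces_glue_add_one (c : Fin 3) :
    (glue H K p q).numFaces c + 1 = H.numFaces c + K.numFaces c := by
  let side : (disjUnion H K).V → ZMod 2 := fun x => Sum.elim (fun _ => 0) (fun _ => 1) x.1
  have hside : side ∈ invariantFun {(disjUnion H K).pairing, (disjUnion H K).colPerm c} := by
    rw [mem_invariantFun_pair]
    exact ⟨(forall_sum_V H K).2 ⟨fun _ => rfl, fun _ => rfl⟩, fun _ => rfl⟩
  have hne : side (inlV H K p) ≠ side (inrV H K q) := zero_ne_one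
  obtain ⟨e⟩ := isIso_glue_flip_disjUnion H K p q
  calc (glue H K p q).numFaces c + 1
      = ((disjUnion H K).flip (inlV H K p) (inrV H K q)).numFaces c + 1 :=
        congrArg (· + 1) (numCycles_congr e.toEquiv e.map_pairing (e.map_col c))
    _ = (disjUnion H K).numFaces c := numCycles_flipPerm_add_one
        (disjUnion H K).pairing_isPerfectMatching ((disjUnion H K).colPerm_isPerfectMatching c)
        hside hne
    _ = H.numFaces c + K.numFaces c := numFaces_disjUnion H K c

theorem F_glue_add_three : (glue H K p q).F + 3 = H.F + K.F := by
  have := numFaces_glue_add_one p q 0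
  have := numFaces_glue_add_one p q 1
  have := numFaces_glue_add_one p q 2
  simp only [F, Fin.sum_univ_three]
  omega

/-- An isomorphism out of a glued graph, from a bijection of the vertices whose compatibility with
the pairings has been checked one kind of edge at a time. -/
def glueIsoOfEquiv {M : TGraph} (e : (glue H K p q).V ≃ M.V)
    (hcol : ∀ c z, e ((glue H K p q).colPerm c z) = M.colPerm c (e z))
    (hp : M.pairing (e (glueInl p q p)) = e (glueInr p q q))
    (hp' : M.pairing (e (glueInl p q (H.pairing p))) = e (glueInr p q (K.pairing q)))
    (hl : ∀ x, x ≠ p → x ≠ H.pairing p →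
      M.pairing (e (glueInl p q x)) = e (glueInl p q (H.pairing x)))
    (hr : ∀ y, y ≠ q → y ≠ K.pairing q →
      M.pairing (e (glueInr p q y)) = e (glueInr p q (K.pairing y))) :
    Iso (glue H K p q) M where
  toEquiv := e
  map_pairing := by
    refine forall_glue_V.2 ⟨fun x => ?_, fun y => ?_⟩
    · by_cases h : x = p
      · rw [h, hp, glue_pairing_glueInl_left]
      by_cases h' : x = H.pairing p
      · rw [h', hp', glue_pairing_glueInl_pairing]
      rw [glue_pairing_glueInl_of_ne h h', hl x h h']
    · by_cases h : y = q
      · rw [h, glue_pairing_glueInr_right, ← hp, M.invol]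
      by_cases h' : y = K.pairing q
      · rw [h', glue_pairing_glueInr_pairing, ← hp', M.invol]
      rw [glue_pairing_glueInr_of_ne h h', hr y h h']
  map_col := hcol

/-- Gluing is functorial for isomorphisms of the glued graphs. -/
def glueCongr {H' K' : TGraph} (e : Iso H H') (f : Iso K K') :
    Iso (glue H K p q) (glue H' K' (e.toEquiv p) (f.toEquiv q)) :=
  let g : (glue H K p q).V ≃ (glue H' K' (e.toEquiv p) (f.toEquiv q)).V :=
    (sumProdDistrib H.B K.B (Fin 4)).trans
      ((e.toEquiv.sumCongr f.toEquiv).trans (sumProdDistrib H'.B K'.B (Fin 4)).symm)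
  have hg : ∀ x, g (glueInl p q x) = glueInl _ _ (e.toEquiv x) := fun _ => rfl
  have hg' : ∀ y, g (glueInr p q y) = glueInr _ _ (f.toEquiv y) := fun _ => rfl
  glueIsoOfEquiv p q g
    (fun c => forall_glue_V.2 ⟨fun x => congrArg (glueInl _ _) (e.map_col c x),
      fun y => congrArg (glueInr _ _) (f.map_col c y)⟩)
    glue_pairing_glueInl_left
    (by rw [hg, hg', e.map_pairing, f.map_pairing, glue_pairing_glueInl_pairing])
    (fun x h h' => by
      rw [hg, hg, e.map_pairing, glue_pairing_glueInl_of_ne (e.toEquiv.injective.ne h)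
        (e.map_pairing p ▸ e.toEquiv.injective.ne h')])
    fun y h h' => by
      rw [hg', hg', f.map_pairing, glue_pairing_glueInr_of_ne (f.toEquiv.injective.ne h)
        (f.map_pairing q ▸ f.toEquiv.injective.ne h')]

/-- Gluing is commutative. -/
def glueComm : Iso (glue H K p q) (glue K H q p) :=
  glueIsoOfEquiv p q ((sumComm H.B K.B).prodCongr (.refl (Fin 4))) (fun _ _ => rfl)
    glue_pairing_glueInr_right glue_pairing_glueInr_pairing
    (fun _ => glue_pairing_glueInr_of_ne) fun _ => glue_pairing_glueInl_of_ne

/-- Gluing does not depend on the simultaneous orientation of the two edges glued together. -/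
def gluePairing : Iso (glue H K p q) (glue H K (H.pairing p) (K.pairing q)) :=
  have hp : glueInl (H.pairing p) (K.pairing q) p =
      glueInl _ _ (H.pairing (H.pairing p)) := by rw [H.invol]
  have hq : glueInr (H.pairing p) (K.pairing q) q =
      glueInr _ _ (K.pairing (K.pairing q)) := by rw [K.invol]
  glueIsoOfEquiv p q (.refl _) (fun _ _ => rfl)
    ((congrArg _ hp).trans (glue_pairing_glueInl_pairing.trans hq.symm))
    glue_pairing_glueInl_left
    (fun x h h' => glue_pairing_glueInl_of_ne h' (by rwa [H.invol]))
    fun y h h' => glue_pairing_glueInr_of_ne h' (by rwa [K.invol])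

theorem isIso_glue_assoc {x v : H.V} (hxv : x ≠ v) (r : L.V) :
    IsIso (glue (glue K H q x) L (glueInr q x v) r) (glue K (glue H L v r) q (glueInl v r x)) := by
  let e : (glue (glue K H q x) L (glueInr q x v) r).V ≃
      (glue K (glue H L v r) q (glueInl v r x)).V :=
    (sumAssoc K.B H.B L.B).prodCongr (.refl (Fin 4))
  have hK : ∀ y, e (glueInl _ _ (glueInl _ _ y)) = glueInl _ _ y := fun _ => rfl
  have hH : ∀ y, e (glueInl _ _ (glueInr _ _ y)) = glueInr _ _ (glueInl _ _ y) := fun _ => rfl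
  have hL : ∀ y, e (glueInr _ _ y) = glueInr _ _ (glueInr _ _ y) := fun _ => rfl
  have hcol : ∀ c z, e (colPerm _ c z) = colPerm _ c (e z) := by
    rintro c ⟨(_ | _) | _, _⟩ <;> rfl
  clear_value e
  have hpairing := H.pairing.injective.eq_iff (a := v) (b := x)
  refine ⟨glueIsoOfEquiv _ _ e hcol ?_ ?_
    (forall_glue_V.2 ⟨fun y h h' => ?_, fun y h h' => ?_⟩) fun y h h' => ?_⟩
  case' refine_3 => by_cases hy : y = q <;> by_cases hy' : y = K.pairing q
  all_goals
    grind [glueInl_inj, glueInr_inj, glueInl_ne_glueInr, glue_pairing_glueInl_left,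
      glue_pairing_glueInl_pairing, glue_pairing_glueInl_of_ne, glue_pairing_glueInr_right,
      glue_pairing_glueInr_pairing, glue_pairing_glueInr_of_ne, invol, fixfree]

variable {q} in
/-- If the two edges of `H` coincide, the gluing points of `K` and `L` are first moved to opposite
ends of this edge. -/
theorem exists_isIso_glue_assoc (x v : H.V) (r : L.V) :
    ∃ v' r', IsIso (glue K (glue H L v r) q (glueInl v r x)) (glue (glue K H q x) L v' r') := by
  by_cases hxv : x = v
  · have hne : x ≠ H.pairing v := hxv ▸ (H.fixfree x).symm
    exact ⟨_, _, .trans ⟨glueCongr _ _ (.refl K) (gluePairing v r)⟩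
      (isIso_glue_assoc q hne (L.pairing r)).symm⟩
  · exact ⟨_, _, (isIso_glue_assoc q hxv r).symm⟩

end Glue

section Base

theorem numFaces_G2 (c : Fin 3) : G2.numFaces c = 2 := by
  let φ : G2.V → Fin 2 := fun v => if v.2 = 0 ∨ v.2 = bubblePerm c 0 then 0 else 1
  let rep : Fin 2 → G2.V := ![((0 : Fin 2), 0), ((0 : Fin 2), bubblePerm (c + 1) 0)]
  refine (numCycles_eq_card φ rep ?_ ?_ ?_ ?_).trans (Nat.card_fin 2) <;> revert c <;> decide

theorem numFaces_G1_self (c : Fin 3) : (G1 c).numFaces c = 2 := by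
  let φ : (G1 c).V → Fin 2 := fun v => if v.2 = 0 ∨ v.2 = bubblePerm c 0 then 0 else 1
  let rep : Fin 2 → (G1 c).V := ![((0 : Fin 1), 0), ((0 : Fin 1), bubblePerm (c + 1) 0)]
  refine (numCycles_eq_card φ rep ?_ ?_ ?_ ?_).trans (Nat.card_fin 2) <;> revert c <;> decide

theorem numFaces_G1_of_ne {c d : Fin 3} (hcd : c ≠ d) : (G1 c).numFaces d = 1 := by
  let rep : Unit → (G1 c).V := fun _ => ((0 : Fin 1), 0)
  refine (numCycles_eq_card (fun _ => ()) rep ?_ ?_ ?_ ?_).trans Nat.card_unique <;>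
    revert c d <;> decide

theorem F_G2 : G2.F = 6 := by
  simp only [F, numFaces_G2, Finset.sum_const, Finset.card_univ, Fintype.card_fin, smul_eq_mul]

theorem F_G1 (c : Fin 3) : (G1 c).F = 4 := by
  rw [F, ← Finset.add_sum_erase _ _ (Finset.mem_univ c), numFaces_G1_self,
    Finset.sum_congr rfl fun d hd => numFaces_G1_of_ne (Finset.ne_of_mem_erase hd).symm]
  simp

theorem b_G2 : G2.b = 2 :=
  rfl

theorem b_G1 (c : Fin 3) : (G1 c).b = 1 :=
  rfl

theorem F_insertDipole (G : TGraph) (v : G.V) : (G.insertDipole v).F = G.F + 3 := by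
  have := F_glue_add_three (K := G2) v ((0 : Fin 2), (0 : Fin 4))
  rw [F_G2] at this
  exact Nat.add_right_cancel this

theorem b_insertDipole (G : TGraph) (v : G.V) : (G.insertDipole v).b = G.b + 2 :=
  b_glue (K := G2) v ((0 : Fin 2), (0 : Fin 4))

theorem _root_.IsMelonic.two_mul_F {G : TGraph} (hG : IsMelonic G) : 2 * G.F = 3 * G.b + 6 := by
  induction hG with
  | base h => rw [h.F_eq, h.b_eq, F_G2, b_G2]
  | @insert G _ v _ h ih =>
    rw [h.F_eq, h.b_eq, F_insertDipole, b_insertDipole]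
    omega

theorem _root_.IsDecoratedTadpole.two_mul_F {G : TGraph} (hG : IsDecoratedTadpole G) :
    2 * G.F = 3 * G.b + 5 := by
  induction hG with
  | base c h => rw [h.F_eq, h.b_eq, F_G1, b_G1]
  | @insert G _ v _ h ih =>
    rw [h.F_eq, h.b_eq, F_insertDipole, b_insertDipole]
    omega

end Base

section Melonic

theorem exists_perm_comm_bubblePerm (k : Fin 4) :
    ∃ f : Perm (Fin 4), f k = 0 ∧ ∀ c l, f (bubblePerm c l) = bubblePerm c (f l) := by
  fin_cases k
  · exact ⟨1, by decide⟩
  · exact ⟨bubblePerm 0, by decide⟩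
  · exact ⟨bubblePerm 1, by decide⟩
  · exact ⟨bubblePerm 2, by decide⟩

theorem exists_iso_G2 (y : G2.V) : ∃ e : Iso G2 G2, e.toEquiv y = ((0 : Fin 2), (0 : Fin 4)) := by
  have hg : ∀ i : Fin 2, ∃ g : Perm (Fin 2), g i = 0 ∧ ∀ j, g (swap 0 1 j) = swap 0 1 (g j) := by
    decide
  obtain ⟨g, hg, hgs⟩ := hg y.1
  obtain ⟨f, hf, hfc⟩ := exists_perm_comm_bubblePerm y.2
  exact ⟨⟨g.prodCongr f, fun v => Prod.ext (hgs v.1) rfl, fun c v => Prod.ext rfl (hfc c v.2)⟩,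
    Prod.ext hg hf⟩

theorem isIso_glue_G2_insertDipole (K : TGraph) (q : K.V) (y : G2.V) :
    IsIso (glue K G2 q y) (K.insertDipole q) := by
  obtain ⟨e, he⟩ := exists_iso_G2 y
  have h : IsIso (glue K G2 q y) (glue K G2 q (e.toEquiv y)) := ⟨glueCongr q y (.refl K) e⟩
  rwa [he] at h

/-- By associativity and commutativity, gluing onto `K` a melonic graph `M` amounts to inserting
one by one the dipoles of which `M` consists. -/
theorem _root_.IsMelonic.glue_induction {P : TGraph → Prop}
    (hiso : ∀ {G H}, P G → IsIso H G → P H)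
    (hins : ∀ {G : TGraph} (v : G.V), P G → P (G.insertDipole v)) {M : TGraph}
    (hM : IsMelonic M) : ∀ {K : TGraph}, P K → ∀ (q : K.V) (p : M.V), P (glue K M q p) := by
  have hG2 {K : TGraph} (hK : P K) (q : K.V) (y : G2.V) : P (glue K G2 q y) :=
    hiso (hins q hK) (isIso_glue_G2_insertDipole K q y)
  induction hM with
  | base h =>
    intro K hK q p
    obtain ⟨e⟩ := h
    exact hiso (hG2 hK _ _) ⟨glueCongr q p (.refl K) e⟩
  | @insert G _ v H h ih =>
    intro K hK q p
    obtain ⟨e⟩ := h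
    suffices ∀ z : (G.insertDipole v).V, P (glue K (G.insertDipole v) q z) from
      hiso (this _) ⟨glueCongr q p (.refl K) e⟩
    refine forall_glue_V.2 ⟨fun x => ?_, fun y => ?_⟩
    · obtain ⟨v', r', hassoc⟩ :=
        exists_isIso_glue_assoc (L := G2) (q := q) x v ((0 : Fin 2), (0 : Fin 4))
      exact hiso (hG2 (ih hK q x) v' r') hassoc
    · obtain ⟨v', r', hassoc⟩ :=
        exists_isIso_glue_assoc (H := G2) (q := q) y ((0 : Fin 2), (0 : Fin 4)) v
      exact hiso (hiso (ih (hG2 hK q y) v' r') hassoc)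
        ⟨glueCongr q (glueInr _ _ y) (.refl K) (glueComm (K := G2) v ((0 : Fin 2), (0 : Fin 4)))⟩

theorem _root_.IsMelonic.of_isIso {G H : TGraph} (hG : IsMelonic G) (h : IsIso H G) :
    IsMelonic H := by
  cases hG with
  | base h' => exact .base (h.trans h')
  | insert hG v h' => exact .insert hG v (h.trans h')

theorem _root_.IsDecoratedTadpole.of_isIso {G H : TGraph} (hG : IsDecoratedTadpole G)
    (h : IsIso H G) : IsDecoratedTadpole H := by
  cases hG with
  | base c h' => exact .base c (h.trans h')
  | insert hG v h' => exact .insert hG v (h.trans h')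

theorem _root_.IsMelonic.glue {H K : TGraph} (hH : IsMelonic H) (hK : IsMelonic K) (p : H.V)
    (q : K.V) : IsMelonic (glue H K p q) :=
  hK.glue_induction .of_isIso (fun v hG => .insert hG v (.refl _)) hH p q

theorem _root_.IsDecoratedTadpole.glue {H K : TGraph} (hH : IsDecoratedTadpole H)
    (hK : IsMelonic K) (p : H.V) (q : K.V) : IsDecoratedTadpole (glue H K p q) :=
  hK.glue_induction .of_isIso (fun v hG => .insert hG v (.refl _)) hH p q

end Melonic

section Cut

variable {G : TGraph}

/-- The graph on a set of bubbles left invariant by the propagators. -/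
noncomputable def restrict (G : TGraph) (S : Set G.B) (hS : G.IsStable S) : TGraph where
  B := S
  fintypeB := Fintype.ofFinite S
  pairing := Function.Involutive.toPerm (fun v => ((⟨(G.pairing (v.1, v.2)).1, (hS _).2 v.1.2⟩,
    (G.pairing (v.1, v.2)).2) : S × Fin 4)) fun v => by simp [G.invol]
  invol := Function.Involutive.toPerm_involutive _
  fixfree v h := G.fixfree (v.1, v.2)
    (Prod.ext (congrArg (fun x => x.1.1) h) (congrArg (fun x => x.2) h))

theorem IsStable.image_val {S : Set G.B} {hS : G.IsStable S} {T : Set S}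
    (hT : (G.restrict S hS).IsStable T) : G.IsStable (Subtype.val '' T) := by
  refine .of_imp ?_
  rintro v ⟨i, hi, hiv⟩
  exact ⟨_, (hT (i, v.2)).2 hi, by rw [← Prod.mk.eta (p := v), ← hiv]; rfl⟩

open scoped Classical in
/-- A graph is the disjoint union of its restrictions to a stable set of bubbles and to the
complement of this set. -/
noncomputable def restrictSumRestrictCompl {S : Set G.B} (hS : G.IsStable S) :
    Iso (disjUnion (G.restrict S hS) (G.restrict Sᶜ hS.compl)) G where
  toEquiv := (Equiv.Set.sumCompl S).prodCongr (.refl (Fin 4))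
  map_pairing := (forall_sum_V _ _).2 ⟨fun _ => rfl, fun _ => rfl⟩
  map_col _ := (forall_sum_V _ _).2 ⟨fun _ => rfl, fun _ => rfl⟩

theorem Connected.connected_restrict (hG : G.Connected) {u w : G.V} (huw : u ≠ w) {S : Set G.B}
    (hS : (G.flip u w).IsStable S) (hu : ¬ (u.1 ∈ S ∧ (G.pairing u).1 ∈ S)) :
    ((G.flip u w).restrict S hS).Connected := by
  have hmeet : ∀ T : Set S, ((G.flip u w).restrict S hS).IsStable T → T.Nonempty →
      u.1 ∈ Subtype.val '' T ∨ (G.pairing u).1 ∈ Subtype.val '' T := by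
    intro T hT hne
    by_contra! hnot
    have hstable := (IsStable.image_val hT).of_flip huw (iff_of_false hnot.2 hnot.1)
    have := connected_iff_isStable.1 hG _ hstable (hne.image _)
    exact hnot.1 (this ▸ Set.mem_univ _)
  refine connected_iff_isStable.2 fun T hT hne => ?_
  by_contra hTne
  have := hmeet T hT hne
  have := hmeet Tᶜ hT.compl (Set.nonempty_compl.2 hTne)
  grind

theorem Connected.exists_isIso_glue (hG : G.Connected) {u w : G.V} (huw : u ≠ w)
    (h : ¬ (G.flip u w).Connected) :
    ∃ (H K : TGraph) (p : H.V) (q : K.V), H.Connected ∧ K.Connected ∧ IsIso G (glue H K p q) := by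
  obtain ⟨S, hS, hu, hpu⟩ : ∃ S : Set G.B, (G.flip u w).IsStable S ∧ u.1 ∈ S ∧
      (G.pairing u).1 ∉ S := by
    rw [connected_iff_isStable] at h
    push Not at h
    obtain ⟨S, hS, hne, huniv⟩ := h
    have hsep : ¬ ((G.pairing u).1 ∈ S ↔ u.1 ∈ S) := fun hu =>
      huniv (connected_iff_isStable.1 hG S (hS.of_flip huw hu) hne)
    by_cases hu : u.1 ∈ S
    · exact ⟨S, hS, hu, fun hpu => hsep (iff_of_true hpu hu)⟩
    · exact ⟨Sᶜ, hS.compl, hu, fun hpu => hsep (iff_of_false hpu hu)⟩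
  refine ⟨(G.flip u w).restrict S hS, (G.flip u w).restrict Sᶜ hS.compl, (⟨u.1, hu⟩, u.2),
    (⟨_, hpu⟩, (G.pairing u).2), hG.connected_restrict huw hS fun h => hpu h.2,
    hG.connected_restrict huw hS.compl fun h => h.1 hu, (isIso_flip_flip huw).trans (.symm ?_)⟩
  exact (isIso_glue_flip_disjUnion _ _ _ _).trans ⟨(restrictSumRestrictCompl hS).flip _ _⟩

end Cut

section Classification

variable {G H : TGraph}

theorem pairing_colPerm_of_fst_eq {v x : G.V} (hx : x.1 = v.1)
    (hv : ∀ c, G.pairing (G.colPerm c v) = G.colPerm c (G.pairing v)) (c : Fin 3) :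
    G.pairing (G.colPerm c x) = G.colPerm c (G.pairing x) := by
  obtain rfl | ⟨d, rfl⟩ := eq_or_exists_eq_colPerm hx
  · exact hv c
  by_cases hcd : c = d
  · rw [hcd, (G.colPerm_isPerfectMatching d).apply_apply, hv,
      (G.colPerm_isPerfectMatching d).apply_apply]
  · rw [colPerm_colPerm_of_ne G hcd, hv, hv, colPerm_colPerm_of_ne G hcd]

theorem Connected.isIso_of_injective (hG : G.Connected) {ψ : H.V → G.V} (v : H.V)
    (hψ : Function.Injective ψ) (hp : ∀ v, ψ (H.pairing v) = G.pairing (ψ v))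
    (hc : ∀ c v, ψ (H.colPerm c v) = G.colPerm c (ψ v)) : IsIso G H := by
  have mem_range {σ : Perm H.V} {τ : Perm G.V} (h : ∀ v, ψ (σ v) = τ (ψ v)) (x : G.V) :
      (τ x ∈ Set.range ψ) = (x ∈ Set.range ψ) := by
    refine propext ⟨?_, ?_⟩
    · rintro ⟨y, hy⟩
      exact ⟨σ.symm y, τ.injective (by rw [← h, apply_symm_apply, hy])⟩
    · rintro ⟨y, rfl⟩
      exact ⟨σ y, h y⟩
  have hsurj : Function.Surjective ψ := fun x =>
    (hG.apply_eq (mem_range hp) (fun c => mem_range (hc c)) (ψ v) x).mp ⟨v, rfl⟩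
  exact .symm ⟨.ofBijective ψ ⟨hψ, hsurj⟩, hp, hc⟩

theorem Connected.isIso_G1 (hG : G.Connected) {v : G.V} (hv : (G.pairing v).1 = v.1)
    (hc : ∀ c, G.pairing (G.colPerm c v) = G.colPerm c (G.pairing v)) :
    ∃ i, IsIso G (G1 i) := by
  obtain ⟨i, hi⟩ := (eq_or_exists_eq_colPerm hv).resolve_left (G.fixfree v)
  have hpair : ∀ x : G.V, x.1 = v.1 → G.pairing x = G.colPerm i x := fun x hx => by
    obtain rfl | ⟨c, rfl⟩ := eq_or_exists_eq_colPerm hx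
    · exact hi
    · rw [hc, hi, colPerm_comm]
  refine ⟨i, hG.isIso_of_injective (ψ := fun y => (v.1, y.2)) ((0 : Fin 1), 0) (fun y z h => ?_)
    (fun y => (hpair (v.1, y.2) rfl).symm) fun c y => rfl⟩
  exact Prod.ext (Subsingleton.elim (α := Fin 1) _ _) (congrArg (fun x : G.V => x.2) h)

theorem Connected.isIso_G2 (hG : G.Connected) {v : G.V} (hv : (G.pairing v).1 ≠ v.1)
    (hc : ∀ c, G.pairing (G.colPerm c v) = G.colPerm c (G.pairing v)) : IsIso G G2 := by
  have hfst : ∀ x : G.V, x.1 = v.1 → (G.pairing x).1 ≠ v.1 := fun x hx => by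
    obtain rfl | ⟨c, rfl⟩ := eq_or_exists_eq_colPerm hx
    · exact hv
    · rw [hc]
      exact hv
  let ψ : G2.V → G.V := fun y =>
    (Matrix.vecCons (v.1, y.2) ![G.pairing (v.1, y.2)] : Fin 2 → G.V) y.1
  have hψ : Function.Injective ψ := by
    rintro ⟨i, k⟩ ⟨j, l⟩ h
    change Fin 2 at i j
    fin_cases i <;> fin_cases j
    · exact Prod.ext rfl (congrArg (fun x : G.V => x.2) h)
    · exact absurd (congrArg Prod.fst h).symm (hfst (v.1, l) rfl)
    · exact absurd (congrArg Prod.fst h) (hfst (v.1, k) rfl)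
    · exact Prod.ext rfl (congrArg (fun x : G.V => x.2) (G.pairing.injective h))
  refine hG.isIso_of_injective (ψ := ψ) ((0 : Fin 2), 0) hψ ?_ ?_
  · rintro ⟨i, k⟩
    change Fin 2 at i
    fin_cases i
    · rfl
    · exact (G.invol _).symm
  · rintro c ⟨i, k⟩
    change Fin 2 at i
    fin_cases i
    · rfl
    · exact pairing_colPerm_of_fst_eq (v := v) (x := (v.1, k)) rfl hc c

theorem Connected.exists_isIso_glue_of_pairing_colPerm (hG : G.Connected)
    (hF : 3 * G.b + 5 ≤ 2 * G.F) {c d : Fin 3} {v : G.V}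
    (hc : G.pairing (G.colPerm c v) = G.colPerm c (G.pairing v))
    (hd : G.pairing (G.colPerm d v) ≠ G.colPerm d (G.pairing v)) :
    ∃ (H K : TGraph) (p : H.V) (q : K.V), H.Connected ∧ K.Connected ∧ IsIso G (glue H K p q) := by
  have hcd : c ≠ d := by
    rintro rfl
    exact hd hc
  have hne : G.colPerm d v ≠ G.colPerm d (G.pairing v) :=
    (G.colPerm d).injective.ne (G.fixfree v).symm
  refine hG.exists_isIso_glue hne fun hflip => ?_
  have hlt := F_lt_F_flip hcd hc hd
  have hle : 2 * (G.flip (G.colPerm d v) (G.colPerm d (G.pairing v))).F ≤ 3 * G.b + 6 :=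
    hflip.two_mul_F_le
  omega

theorem Connected.isIso_or_exists_isIso_glue (hG : G.Connected) (hF : 3 * G.b + 5 ≤ 2 * G.F) :
    IsIso G G2 ∨ (∃ i, IsIso G (G1 i)) ∨
      ∃ (H K : TGraph) (p : H.V) (q : K.V),
        H.Connected ∧ K.Connected ∧ IsIso G (glue H K p q) := by
  obtain ⟨c, v, hc⟩ := hG.exists_pairing_colPerm hF
  by_cases hall : ∀ d, G.pairing (G.colPerm d v) = G.colPerm d (G.pairing v)
  · by_cases hv : (G.pairing v).1 = v.1
    · exact .inr (.inl (hG.isIso_G1 hv hall))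
    · exact .inl (hG.isIso_G2 hv hall)
  · push Not at hall
    obtain ⟨d, hd⟩ := hall
    exact .inr (.inr (hG.exists_isIso_glue_of_pairing_colPerm hF hc hd))

theorem b_pos (v : G.V) : 0 < G.b :=
  Fintype.card_pos_iff.2 ⟨v.1⟩

theorem Connected.isMelonic_or_isDecoratedTadpole (hG : G.Connected)
    (hF : 3 * G.b + 5 ≤ 2 * G.F) : IsMelonic G ∨ IsDecoratedTadpole G := by
  induction hn : G.b using Nat.strong_induction_on generalizing G with
  | _ n ih =>
    obtain hG2 | ⟨i, hG1⟩ | ⟨H, K, p, q, hH, hK, hglue⟩ := hG.isIso_or_exists_isIso_glue hF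
    · exact .inl (.base hG2)
    · exact .inr (.base i hG1)
    have hFeq := F_glue_add_three p q
    have hbeq := b_glue p q
    rw [← hglue.F_eq] at hFeq
    rw [← hglue.b_eq] at hbeq
    have hHpos := b_pos p
    have hKpos := b_pos q
    have hHle := hH.two_mul_F_le
    have hKle := hK.two_mul_F_le
    obtain hHm | hHt := ih H.b (by omega) hH (by omega) rfl <;>
      obtain hKm | hKt := ih K.b (by omega) hK (by omega) rfl
    · exact .inl ((hHm.glue hKm p q).of_isIso hglue)
    · exact .inr ((hKt.glue hHm q p).of_isIso (hglue.trans ⟨glueComm p q⟩))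
    · exact .inr ((hHt.glue hKm p q).of_isIso hglue)
    · have := hHt.two_mul_F
      have := hKt.two_mul_F
      omega

theorem Connected.isMelonic_iff (hG : G.Connected) : IsMelonic G ↔ 2 * G.F = 3 * G.b + 6 := by
  refine ⟨IsMelonic.two_mul_F, fun h =>
    (hG.isMelonic_or_isDecoratedTadpole (by omega)).resolve_right fun ht => ?_⟩
  have := ht.two_mul_F
  omega

theorem Connected.isDecoratedTadpole_iff (hG : G.Connected) :
    IsDecoratedTadpole G ↔ 2 * G.F = 3 * G.b + 5 := by
  refine ⟨IsDecoratedTadpole.two_mul_F, fun h =>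
    (hG.isMelonic_or_isDecoratedTadpole (by omega)).resolve_left fun hm => ?_⟩
  have := hm.two_mul_F
  omega

theorem exponent_le_iff {x : ℚ} {k : ℕ} (hx : 2 * x = k) :
    (G.F : ℚ) - 3 / 2 * G.b ≤ x ↔ 2 * G.F ≤ 3 * G.b + k := by
  rw [← Nat.cast_le (α := ℚ)]
  push_cast
  constructor <;> intro h <;> linarith

theorem exponent_eq_iff {x : ℚ} {k : ℕ} (hx : 2 * x = k) :
    (G.F : ℚ) - 3 / 2 * G.b = x ↔ 2 * G.F = 3 * G.b + k := by
  rw [← Nat.cast_inj (R := ℚ)]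
  push_cast
  constructor <;> intro h <;> linarith

end Classification

end TGraph

/-- In the free energy expansion of the `O(N)^3` tetrahedral
tensor model, the exponent `F(G) - (3/2) b(G)` of `N` is at most 3 for every
connected graph, with equality exactly for melonic graphs; the next largest
exponent is `5/2`, attained exactly by the melon-decorated double tadpoles. -/
theorem exponent_classification (G : TGraph) (hG : G.Connected) :
    (G.F : ℚ) - 3 / 2 * G.b ≤ 3 ∧
      ((G.F : ℚ) - 3 / 2 * G.b = 3 ↔ IsMelonic G) ∧
      (¬ IsMelonic G → (G.F : ℚ) - 3 / 2 * G.b ≤ 5 / 2) ∧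
      ((G.F : ℚ) - 3 / 2 * G.b = 5 / 2 ↔ IsDecoratedTadpole G) := by
  have h_three : 2 * (3 : ℚ) = (6 : ℕ) := by norm_num
  have h_five_halves : 2 * (5 / 2 : ℚ) = (5 : ℕ) := by norm_num
  have hle := hG.two_mul_F_le
  rw [hG.isMelonic_iff, hG.isDecoratedTadpole_iff, exponent_le_iff h_three,
    exponent_eq_iff h_three, exponent_le_iff h_five_halves, exponent_eq_iff h_five_halves]
  omega
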